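/- arXiv:1005.0078 — 4 statements merged into one kernel-verified Lean document; each statement's English description precedes it below -/
import Mathlib

section
/- A dominant polynomial map f: ℂⁿ → ℂⁿ is proper if and only if the induced ring homomorphism f*: ℂ[s₁,…,sₙ] → ℂ[x₁,…,xₙ], sending sᵢ to the i-th component polynomial fᵢ, makes ℂ[x₁,…,xₙ] an integral extension of the image of f*. -/
open MvPolynomial

/-- The nonvanishing locus of a nonzero complex polynomial is dense. -/
lemma MvPolynomial.dense_eval_ne_zero {σ : Type*} [Fintype σ] {h : MvPolynomial σ ℂ}
    (hh : h ≠ 0) : Dense {s : σ → ℂ | eval s h ≠ 0} := by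
  intro s
  rw [Metric.mem_closure_iff]
  intro ε hε
  by_contra! hne
  refine hh (funext_set (fun i ↦ Metric.ball (s i) ε) (fun i ↦ ?_) fun x hx ↦ ?_)
  · exact infinite_of_mem_nhds (s i) (Metric.ball_mem_nhds _ hε)
  · by_contra hx0
    refine (hne x (by simpa using hx0)).not_gt ?_
    rw [dist_comm, dist_pi_lt_iff hε]
    exact fun i ↦ hx i trivial

/-- A polynomial that is locally bounded by a multiple of `b` is divisible by `b`. -/
lemma MvPolynomial.dvd_of_locally_bounded {σ : Type*} [Fintype σ] (b : MvPolynomial σ ℂ) :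
    ∀ a h : MvPolynomial σ ℂ, b ≠ 0 → h ≠ 0 →
      (∀ R : ℝ, ∃ C : ℝ, ∀ s : σ → ℂ, ‖s‖ ≤ R → eval s h ≠ 0 →
        ‖eval s a‖ ≤ C * ‖eval s b‖) → b ∣ a := by
  induction b using UniqueFactorizationMonoid.induction_on_prime with
  | h₁ => intro a h hb; exact absurd rfl hb
  | h₂ b hb => intro a h _ _ _; exact hb.dvd
  | h₃ b p hb hp ih =>
    intro a h hbp hh H
    have hvanish : ∀ s : σ → ℂ, eval s p = 0 → eval s a = 0 := by
      intro s hs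
      obtain ⟨C, hC⟩ := H (‖s‖ + 1)
      have hclosed : IsClosed {x : σ → ℂ | ‖eval x a‖ ≤ C * ‖eval x (p * b)‖} :=
        isClosed_le (continuous_eval a).norm (continuous_const.mul (continuous_eval _).norm)
      have hsub : Metric.ball s 1 ∩ {x | eval x h ≠ 0} ⊆
          {x : σ → ℂ | ‖eval x a‖ ≤ C * ‖eval x (p * b)‖} := by
        rintro x ⟨hx, hx0⟩
        refine hC x ?_ hx0
        rw [mem_ball_iff_norm] at hx
        linarith [norm_le_norm_add_norm_sub' x s]
      have hmem := closure_minimal hsub hclosed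
        ((dense_eval_ne_zero hh).open_subset_closure_inter Metric.isOpen_ball
          (Metric.mem_ball_self one_pos))
      simpa [hs] using hmem
    have hpa : p ∣ a := by
      have : (Ideal.span {p}).IsPrime := (Ideal.span_singleton_prime hp.ne_zero).2 hp
      rw [← Ideal.mem_span_singleton,
        ← IsPrime.vanishingIdeal_zeroLocus (K := ℂ) (Ideal.span {p})]
      intro s hs
      exact hvanish s (hs p (Ideal.mem_span_singleton_self p))
    obtain ⟨a, rfl⟩ := hpa
    refine mul_dvd_mul_left p (ih a (h * p) hb (mul_ne_zero hh hp.ne_zero) fun R ↦ ?_)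
    obtain ⟨C, hC⟩ := H R
    refine ⟨C, fun s hs hne ↦ ?_⟩
    rw [map_mul] at hne
    have h1 := hC s hs (left_ne_zero_of_mul hne)
    rw [map_mul, map_mul, norm_mul, norm_mul, mul_left_comm] at h1
    exact le_of_mul_le_mul_left h1 (norm_pos_iff.2 (right_ne_zero_of_mul hne))

/-- Homomorphisms to an algebraically closed field extend along integral ring homomorphisms. -/
lemma RingHom.IsIntegral.exists_extension {R S k : Type*} [CommRing R] [CommRing S] [IsDomain S]
    [Field k] [IsAlgClosed k] {e : R →+* S} (he : e.IsIntegral) (ψ : R →+* k)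
    (hker : RingHom.ker e ≤ RingHom.ker ψ) : ∃ χ : S →+* k, χ.comp e = ψ := by
  let := e.toAlgebra
  have : Algebra.IsIntegral R S := ⟨he⟩
  have : (RingHom.ker ψ).IsPrime := RingHom.ker_isPrime ψ
  obtain ⟨Q, hQ, hQP⟩ :=
    Ideal.exists_ideal_over_prime_of_isIntegral_of_isDomain (S := S) (RingHom.ker ψ) hker
  have : Q.LiesOver (RingHom.ker ψ) := ⟨hQP.symm⟩
  let : Algebra (R ⧸ RingHom.ker ψ) k := (RingHom.kerLift ψ).toAlgebra
  have : FaithfulSMul (R ⧸ RingHom.ker ψ) k :=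
    (faithfulSMul_iff_algebraMap_injective _ _).2 (RingHom.kerLift_injective ψ)
  have : IsDomain (S ⧸ Q) := Ideal.Quotient.isDomain Q
  have : Module.IsTorsionFree (R ⧸ RingHom.ker ψ) (S ⧸ Q) :=
    Module.isTorsionFree_iff_faithfulSMul.2 inferInstance
  let l : (S ⧸ Q) →ₐ[R ⧸ RingHom.ker ψ] k := IsAlgClosed.lift
  refine ⟨l.toRingHom.comp (Ideal.Quotient.mk Q), RingHom.ext fun r ↦ ?_⟩
  exact l.commutes (Ideal.Quotient.mk _ r)

/-- A complex point of a subring `D` of a polynomial ring comes from an affine point as soon as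
`D` contains the coordinates up to an element not vanishing at the point. -/
lemma MvPolynomial.exists_eval_eq {τ D : Type*} [CommRing D] {ι : D →+* MvPolynomial τ ℂ}
    (hι : Function.Injective ι) (χ : D →+* ℂ) {h : D} (hh : χ h ≠ 0)
    (hC : ∀ c, ∃ d, ι d = C c ∧ χ d = c) (hX : ∀ i, ∃ d, ι d = ι h * X i) :
    ∃ x : τ → ℂ, ∀ d, χ d = eval x (ι d) := by
  choose y hy using hX
  refine ⟨fun i ↦ χ (y i) / χ h, fun d ↦ ?_⟩
  set x : τ → ℂ := fun i ↦ χ (y i) / χ h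
  have key : ∀ P : MvPolynomial τ ℂ, ∃ (N : ℕ) (z : D),
      ι z = ι h ^ N * P ∧ χ z = χ h ^ N * eval x P := by
    intro P
    induction P using MvPolynomial.induction_on with
    | C c =>
      obtain ⟨z, hz, hz'⟩ := hC c
      exact ⟨0, z, by simp [hz], by simp [hz']⟩
    | add P Q hP hQ =>
      obtain ⟨N, z, hz, hz'⟩ := hP
      obtain ⟨M, w, hw, hw'⟩ := hQ
      refine ⟨N + M, h ^ M * z + h ^ N * w, ?_, ?_⟩
      · simp only [map_add, map_mul, map_pow, hz, hw]; ring
      · simp only [map_add, map_mul, map_pow, hz', hw']; ring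
    | mul_X P i hP =>
      obtain ⟨N, z, hz, hz'⟩ := hP
      refine ⟨N + 1, z * y i, ?_, ?_⟩
      · simp only [map_mul, hz, hy]; ring
      · have hi : x i * χ h = χ (y i) := div_mul_cancel₀ _ hh
        simp only [map_mul, hz', eval_X, ← hi]; ring
  obtain ⟨N, z, hz, hzχ⟩ := key (ι d)
  have : z = h ^ N * d := hι (by simp [hz])
  rw [this, map_mul, map_pow] at hzχ
  exact mul_left_cancel₀ (pow_ne_zero N hh) hzχ

/-- If `φ h * b` is integral and its quotient by `h` is locally bounded on the points of the
integral closure, then `b` is integral. -/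
lemma MvPolynomial.isIntegralElem_of_locally_bounded {σ B : Type*} [Fintype σ] [CommRing B]
    [IsDomain B] {φ : MvPolynomial σ ℂ →+* B} (hφ : Function.Injective φ) {h : MvPolynomial σ ℂ}
    (hh : h ≠ 0) {b : B} (hb : φ.IsIntegralElem (φ h * b))
    (H : ∀ R : ℝ, ∃ C : ℝ, ∀ s : σ → ℂ, ‖s‖ ≤ R → eval s h ≠ 0 →
      ∀ (D : Subring B) (_ : ∀ d, d ∈ D ↔ φ.IsIntegralElem d) (χ : D →+* ℂ),
        (∀ (a : MvPolynomial σ ℂ) (d : D), (d : B) = φ a → χ d = eval s a) →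
          ∀ d : D, (d : B) = φ h * b → ‖χ d‖ ≤ C * ‖eval s h‖) :
    φ.IsIntegralElem b := by
  let := φ.toAlgebra
  have : FaithfulSMul (MvPolynomial σ ℂ) B := (faithfulSMul_iff_algebraMap_injective _ _).2 hφ
  let D := integralClosure (MvPolynomial σ ℂ) B
  have hb' : IsIntegral (MvPolynomial σ ℂ) (φ h * b) := hb
  let y : D := ⟨φ h * b, hb'⟩
  set m := minpoly (MvPolynomial σ ℂ) (φ h * b) with hm
  have hmon : m.Monic := minpoly.monic hb'
  have hroots : ∀ R : ℝ, ∃ C : ℝ, ∀ s : σ → ℂ, ‖s‖ ≤ R → eval s h ≠ 0 →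
      ∀ z ∈ (m.map (eval s)).roots, ‖z‖ ≤ C * ‖eval s h‖ := by
    intro R
    obtain ⟨C, hC⟩ := H R
    refine ⟨C, fun s hs hsh z hz ↦ ?_⟩
    have hz0 : m.eval₂ (eval s) z = 0 := by
      rw [← Polynomial.eval_map]
      exact (Polynomial.mem_roots'.1 hz).2
    let e : Polynomial (MvPolynomial σ ℂ) →+* D := (Polynomial.aeval y).toRingHom
    have he : e.IsIntegral := by
      refine RingHom.IsIntegral.tower_top (Polynomial.C) e ?_
      have : e.comp Polynomial.C = algebraMap (MvPolynomial σ ℂ) D :=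
        RingHom.ext fun a ↦ Polynomial.aeval_C y a
      rw [this]
      exact algebraMap_isIntegral_iff.2 inferInstance
    have hker : RingHom.ker e ≤ RingHom.ker (Polynomial.eval₂RingHom (eval s) z) := by
      intro p hp
      have hp' : Polynomial.aeval (φ h * b) p = 0 := by
        have h1 : ((Polynomial.aeval y p : D) : B) = 0 := by
          have : Polynomial.aeval y p = 0 := hp
          rw [this]; rfl
        rwa [Polynomial.aeval_subalgebra_coe] at h1
      obtain ⟨q, rfl⟩ := minpoly.isIntegrallyClosed_dvd hb' hp'
      rw [RingHom.mem_ker, map_mul]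
      simp only [Polynomial.coe_eval₂RingHom]
      rw [← hm, hz0, zero_mul]
    obtain ⟨χ, hχ⟩ := he.exists_extension _ hker
    have hχ' : ∀ p, χ (e p) = p.eval₂ (eval s) z := fun p ↦ RingHom.congr_fun hχ p
    have h2 := hC s hs hsh D.toSubring (fun d ↦ Iff.rfl) χ (fun a d hd ↦ by
      have : d = e (Polynomial.C a) := Subtype.ext <| hd.trans <|
        congrArg Subtype.val (Polynomial.aeval_C y a).symm
      rw [this, hχ', Polynomial.eval₂_C]) y rfl
    have h3 := hχ' Polynomial.X
    rw [Polynomial.eval₂_X] at h3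
    have h4 : e Polynomial.X = y := by simp [e]
    rwa [← h3, h4]
  have hdvd : ∀ i, h ^ (m.natDegree - i) ∣ m.coeff i := by
    intro i
    refine dvd_of_locally_bounded _ _ h (pow_ne_zero _ hh) hh fun R ↦ ?_
    obtain ⟨C, hC⟩ := hroots R
    refine ⟨C ^ (m.natDegree - i) * m.natDegree.choose i, fun s hs hsh ↦ ?_⟩
    have := Polynomial.coeff_le_of_roots_le i hmon (IsAlgClosed.splits (m.map (eval s)))
      (hC s hs hsh)
    rw [Polynomial.coeff_map] at this
    refine this.trans_eq ?_
    rw [map_pow, norm_pow, mul_pow]; ring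
  choose c hc using hdvd
  set d := m.natDegree with hd
  refine ⟨Polynomial.X ^ d + ∑ i ∈ Finset.range d, Polynomial.C (c i) * Polynomial.X ^ i, ?_, ?_⟩
  · refine Polynomial.monic_X_pow_add ?_
    rw [← Fin.sum_univ_eq_sum_range (fun i ↦ Polynomial.C (c i) * Polynomial.X ^ i)]
    exact Polynomial.degree_sum_fin_lt _
  · have h0 : φ h ^ d ≠ 0 := pow_ne_zero _ ((map_ne_zero_iff φ hφ).2 hh)
    refine mul_left_cancel₀ h0 ?_
    have hm0 : m.eval₂ φ (φ h * b) = 0 := minpoly.aeval (MvPolynomial σ ℂ) (φ h * b)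
    rw [hmon.as_sum] at hm0
    simp only [Polynomial.eval₂_add, Polynomial.eval₂_finsetSum, Polynomial.eval₂_mul,
      Polynomial.eval₂_C, Polynomial.eval₂_X_pow] at hm0 ⊢
    rw [mul_zero, ← hm0, mul_add, mul_pow, Finset.mul_sum]
    congr 1
    refine Finset.sum_congr rfl fun i hi ↦ ?_
    rw [hc i, map_mul, map_pow, mul_pow, ← pow_sub_mul_pow _ (Finset.mem_range.1 hi).le]
    ring

/-- Algebraically independent families of `n` polynomials in `n` variables: all variables become
integral over them after multiplication by a common nonzero element. -/
lemma MvPolynomial.exists_integral_multiple_X {σ k : Type*} [Fintype σ] [Field k]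
    {F : σ → MvPolynomial σ k} (hF : AlgebraicIndependent k F) :
    ∃ h : MvPolynomial σ k, h ≠ 0 ∧
      ∀ j, (aeval F : MvPolynomial σ k →ₐ[k] MvPolynomial σ k).toRingHom.IsIntegralElem
        (aeval F h * X j) := by
  classical
  have hbasis : IsTranscendenceBasis k F :=
    hF.isTranscendenceBasis_of_lift_trdeg_le_of_finite (by simp)
  have := hbasis.isAlgebraic
  let φ : MvPolynomial σ k →+* MvPolynomial σ k := (aeval F : _ →ₐ[k] MvPolynomial σ k).toRingHom
  have hj : ∀ j, ∃ h : MvPolynomial σ k, h ≠ 0 ∧ φ.IsIntegralElem (φ h * X j) := by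
    intro j
    obtain ⟨z, hz, p, hp, hpz⟩ := (Algebra.IsAlgebraic.isAlgebraic
      (R := Algebra.adjoin k (Set.range F)) (X j : MvPolynomial σ k)).exists_integral_multiple
    have hcoe : ∀ z, φ (hF.aevalEquiv.symm z) = z := by
      intro z
      obtain ⟨w, rfl⟩ := hF.aevalEquiv.surjective z
      simp [φ]
    refine ⟨hF.aevalEquiv.symm z, by simpa using hz,
      p.map (hF.aevalEquiv.symm : _ →+* MvPolynomial σ k), hp.map _, ?_⟩
    rw [Polynomial.eval₂_map, hcoe]
    convert hpz using 2
    · exact RingHom.ext hcoe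
    · exact (Algebra.smul_def z _).symm
  choose g hg0 hg using hj
  refine ⟨∏ i, g i, Finset.prod_ne_zero_iff.2 fun i _ ↦ hg0 i, fun j ↦ ?_⟩
  rw [← Finset.mul_prod_erase _ _ (Finset.mem_univ j), map_mul, mul_right_comm]
  exact (hg j).mul (f := φ) (RingHom.isIntegralElem_map φ)

/-- Polynomial maps along which the coordinates are integral have bounded preimages of compact
sets. -/
lemma MvPolynomial.isBounded_preimage_of_isIntegral {σ τ : Type*} [Fintype σ] [Fintype τ]
    {F : τ → MvPolynomial σ ℂ}
    (hF : (aeval F : MvPolynomial τ ℂ →ₐ[ℂ] MvPolynomial σ ℂ).toRingHom.IsIntegral)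
    {K : Set (τ → ℂ)} (hK : IsCompact K) :
    Bornology.IsBounded ((fun x i ↦ eval x (F i)) ⁻¹' K) := by
  have hcoord : ∀ i, ∃ M : ℝ, ∀ x : σ → ℂ, (fun i ↦ eval x (F i)) ∈ K → ‖x i‖ ≤ M := by
    intro i
    obtain ⟨p, hp, hp0⟩ := hF (X i)
    have hbdd : ∀ j, ∃ M : NNReal, ∀ s ∈ K, ‖eval s (p.coeff j)‖₊ ≤ M := by
      intro j
      obtain ⟨M, hM⟩ := hK.exists_bound_of_continuousOn (continuous_eval (p.coeff j)).continuousOn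
      exact ⟨M.toNNReal, fun s hs ↦ NNReal.le_toNNReal_of_coe_le (hM s hs)⟩
    choose M hM using hbdd
    refine ⟨((Finset.range p.natDegree).sup M + 1 : NNReal), fun x hx ↦ ?_⟩
    set s : τ → ℂ := fun i ↦ eval x (F i) with hs
    have hcomp : (eval x).comp (aeval F : MvPolynomial τ ℂ →ₐ[ℂ] _).toRingHom = eval s := by
      apply MvPolynomial.ringHom_ext <;> intro j <;> simp [hs]
    have hroot : (p.map (eval s)).IsRoot (x i) := by
      have := congrArg (eval x) hp0
      rw [Polynomial.hom_eval₂, hcomp, eval_X, map_zero] at this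
      rwa [Polynomial.IsRoot, Polynomial.eval_map]
    have hlt := hroot.norm_lt_cauchyBound (hp.map _).ne_zero
    rw [Polynomial.cauchyBound, (hp.map _).leadingCoeff, hp.natDegree_map, nnnorm_one,
      div_one] at hlt
    refine NNReal.coe_le_coe.2 (hlt.le.trans ?_)
    gcongr with j
    rw [Polynomial.coeff_map]
    exact hM j s hx
  choose M hM using hcoord
  refine (Bornology.IsBounded.pi fun i ↦
    Metric.isBounded_closedBall (x := (0 : ℂ)) (r := M i)).subset fun x hx i _ ↦ ?_
  exact mem_closedBall_zero_iff.2 (hM i x hx)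

/-- A dominant polynomial map `f : ℂⁿ → ℂⁿ` (dominant: the image is
Zariski dense, i.e. every polynomial vanishing on the image is zero) is proper
(preimages of compact sets are compact) if and only if the push-forward ring map
`f* : ℂ[s₁,…,sₙ] → ℂ[x₁,…,xₙ]`, `sᵢ ↦ fᵢ`, is integral, i.e. `ℂ[x₁,…,xₙ]` is an
integral extension of the image of `f*`. -/
theorem stmt_1 (n : ℕ) (F : Fin n → MvPolynomial (Fin n) ℂ)
    (f : (Fin n → ℂ) → (Fin n → ℂ))
    (hf : ∀ x i, f x i = MvPolynomial.eval x (F i))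
    (hdom : ∀ P : MvPolynomial (Fin n) ℂ,
      (∀ y ∈ Set.range f, MvPolynomial.eval y P = 0) → P = 0) :
    (∀ K : Set (Fin n → ℂ), IsCompact K → IsCompact (f ⁻¹' K)) ↔
      (MvPolynomial.aeval F : MvPolynomial (Fin n) ℂ →ₐ[ℂ]
        MvPolynomial (Fin n) ℂ).toRingHom.IsIntegral := by
  obtain rfl : f = fun x i ↦ eval x (F i) := funext fun x ↦ funext fun i ↦ hf x i
  have hcomp : ∀ x a, eval x (aeval F a) = eval (fun i ↦ eval x (F i)) a := by
    intro x a
    exact comp_aeval_apply F (aeval x) a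
  constructor
  · intro hproper
    have hF : AlgebraicIndependent ℂ F := by
      rw [AlgebraicIndependent, injective_iff_map_eq_zero]
      intro P hP
      refine hdom P ?_
      rintro _ ⟨x, rfl⟩
      rw [← hcomp, hP, map_zero]
    obtain ⟨h, hh, hX⟩ := exists_integral_multiple_X hF
    have hvar : ∀ j, (aeval F : MvPolynomial (Fin n) ℂ →ₐ[ℂ] _).toRingHom.IsIntegralElem (X j) := by
      intro j
      refine isIntegralElem_of_locally_bounded hF hh (hX j) fun R ↦ ?_
      obtain ⟨M, hM⟩ := (hproper _ (isCompact_closedBall 0 R)).isBounded.exists_norm_le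
      refine ⟨M, fun s hs hsh D hD χ hχ d hd ↦ ?_⟩
      have hmem : ∀ a, aeval F a ∈ D := fun a ↦ (hD _).2 (RingHom.isIntegralElem_map _)
      obtain ⟨x, hx⟩ := exists_eval_eq (ι := D.subtype) Subtype.val_injective χ
        (h := ⟨aeval F h, hmem h⟩) (by rwa [hχ h _ rfl])
        (fun c ↦ ⟨⟨aeval F (C c), hmem _⟩, by simp, by rw [hχ (C c) _ rfl, eval_C]⟩)
        (fun i ↦ ⟨⟨aeval F h * X i, (hD _).2 (hX i)⟩, rfl⟩)
      have hxs : (fun i ↦ eval x (F i)) = s := by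
        funext i
        have h1 := hx ⟨aeval F (X i), hmem _⟩
        rw [hχ (X i) _ rfl, eval_X] at h1
        simpa using h1.symm
      have hxM : ‖x‖ ≤ M := hM x (by simpa [hxs] using hs)
      rw [hx d, Subring.subtype_apply, hd, map_mul, eval_X, norm_mul, mul_comm]
      change _ * ‖eval x (aeval F h)‖ ≤ _
      rw [hcomp, hxs]
      gcongr
      exact (norm_le_pi_norm x j).trans hxM
    intro P
    induction P using MvPolynomial.induction_on with
    | C c =>
      have := RingHom.isIntegralElem_map (x := C c)
        (aeval F : MvPolynomial (Fin n) ℂ →ₐ[ℂ] MvPolynomial (Fin n) ℂ).toRingHom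
      simpa using this
    | add P Q hP hQ => exact hP.add _ hQ
    | mul_X P i hP => exact hP.mul _ (hvar i)
  · intro hint K hK
    refine Metric.isCompact_of_isClosed_isBounded (hK.isClosed.preimage ?_)
      (isBounded_preimage_of_isIntegral hint hK)
    exact continuous_pi fun i ↦ continuous_eval (F i)
end

section
/- For d ≥ 4 and λ, μ ∈ Γ_d with λ^d ≠ μ^d, the maps f_{d,λ}(x,y) = (x, y^{d+1}/(d+1) + (λ/2)x^{d−1}y² + x^d y) and f_{d,μ} are not equivalent under pre- and post-composition with polynomial automorphisms of ℂ². -/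
/-- The binary form `F_{d,λ}` is square-free. -/
def IsSquareFreeForm (d : ℕ) (lam : ℂ) : Prop :=
  ∃ α β : Fin d → ℂ,
    (∀ x y : ℂ, y ^ d + lam * x ^ (d - 1) * y + x ^ d = ∏ i, (α i * x + β i * y)) ∧
    ∀ i j, i ≠ j → α i * β j ≠ α j * β i

/-- `f : ℂ² → ℂ²` is a polynomial map. -/
def IsPolyMap (f : ℂ × ℂ → ℂ × ℂ) : Prop :=
  ∃ P Q : MvPolynomial (Fin 2) ℂ, ∀ p : ℂ × ℂ,
    f p = (MvPolynomial.eval ![p.1, p.2] P, MvPolynomial.eval ![p.1, p.2] Q)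

/-- A polynomial automorphism of `ℂ²`. -/
def IsPolyAut (Φ : ℂ × ℂ ≃ ℂ × ℂ) : Prop :=
  IsPolyMap Φ ∧ IsPolyMap Φ.symm

/-- The map `f_{d,λ}(x,y) = (x, y^{d+1}/(d+1) + (λ/2) x^{d−1} y² + x^d y)`. -/
noncomputable def fdl (d : ℕ) (lam : ℂ) (p : ℂ × ℂ) : ℂ × ℂ :=
  (p.1, p.2 ^ (d + 1) / (d + 1) + lam / 2 * p.1 ^ (d - 1) * p.2 ^ 2 + p.1 ^ d * p.2)

open Filter Topology

/-- The binary form `F_{d,λ} = y^d + λ x^{d-1} y + x^d`, the Jacobian determinant of `f_{d,λ}`. -/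
noncomputable def criticalForm (d : ℕ) (lam : ℂ) (p : ℂ × ℂ) : ℂ :=
  p.2 ^ d + lam * p.1 ^ (d - 1) * p.2 + p.1 ^ d

lemma continuous_criticalForm (d : ℕ) (lam : ℂ) : Continuous (criticalForm d lam) := by
  unfold criticalForm
  fun_prop

lemma criticalForm_smul {d : ℕ} (hd : 1 ≤ d) (lam t : ℂ) (p : ℂ × ℂ) :
    criticalForm d lam (t • p) = t ^ d * criticalForm d lam p := by
  obtain ⟨k, rfl⟩ := Nat.exists_eq_add_of_le' hd
  simp only [criticalForm, Prod.smul_fst, Prod.smul_snd, smul_eq_mul, Nat.add_sub_cancel]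
  ring

/-- The only singular zero of a square-free form `F_{d,λ}` is the origin. -/
lemma eq_zero_of_tendsto_criticalForm {d : ℕ} (hd : 2 ≤ d) {lam : ℂ}
    (h : IsSquareFreeForm d lam) {q : ℂ × ℂ} (hq : criticalForm d lam q = 0)
    (hder : ∀ w : ℂ × ℂ,
      Tendsto (fun t : ℂ => t⁻¹ * criticalForm d lam (q + t • w)) (𝓝[≠] 0) (𝓝 0)) :
    q = 0 := by
  obtain ⟨α, β, hprod, hdist⟩ := h
  have hF : ∀ p, criticalForm d lam p = ∏ i, (α i * p.1 + β i * p.2) := fun p => hprod p.1 p.2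
  rw [hF, Finset.prod_eq_zero_iff] at hq
  obtain ⟨i, -, hi⟩ := hq
  obtain ⟨w, hw⟩ : ∃ w : ℂ × ℂ, α i * w.1 + β i * w.2 ≠ 0 := by
    by_contra! hall
    have hα : α i = 0 := by simpa using hall (1, 0)
    have hβ : β i = 0 := by simpa using hall (0, 1)
    have : Nontrivial (Fin d) := Fin.nontrivial_iff_two_le.2 hd
    obtain ⟨j, hj⟩ := exists_ne i
    exact hdist i j hj.symm (by rw [hα, hβ]; ring)
  set G : ℂ → ℂ := fun t => (α i * w.1 + β i * w.2) *
    ∏ j ∈ Finset.univ.erase i, (α j * (q + t • w).1 + β j * (q + t • w).2) with hG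
  have hGc : Continuous G := by fun_prop
  have hGt : Tendsto G (𝓝[≠] 0) (𝓝 0) := by
    refine (hder w).congr' ?_
    filter_upwards [self_mem_nhdsWithin] with t (ht : t ≠ 0)
    have hfac : α i * (q + t • w).1 + β i * (q + t • w).2 = t * (α i * w.1 + β i * w.2) := by
      simp only [Prod.fst_add, Prod.snd_add, Prod.smul_fst, Prod.smul_snd, smul_eq_mul]
      linear_combination hi
    rw [hF, ← Finset.mul_prod_erase _ _ (Finset.mem_univ i), hfac, mul_assoc,
      inv_mul_cancel_left₀ ht]
  have hG0 : G 0 = 0 := tendsto_nhds_unique (hGc.continuousAt.tendsto.mono_left nhdsWithin_le_nhds) hGt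
  simp only [hG, zero_smul, add_zero, mul_eq_zero, hw, false_or, Finset.prod_eq_zero_iff] at hG0
  obtain ⟨j, hj, hj0⟩ := hG0
  have hne := sub_ne_zero.2 (hdist j i (Finset.ne_of_mem_erase hj))
  refine Prod.ext (mul_left_cancel₀ hne ?_) (mul_left_cancel₀ hne ?_)
  · simp only [Prod.fst_zero, mul_zero]
    linear_combination β i * hj0 - β j * hi
  · simp only [Prod.snd_zero, mul_zero]
    linear_combination α j * hi - α i * hj0

/-- Forms `F_{d,λ}`, `F_{d,μ}` that agree up to a factor and a linear change of variables
fixing the line `x = 0` satisfy `λ^d = μ^d`. -/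
lemma pow_eq_pow_of_criticalForm_eq {d : ℕ} (hd : 3 ≤ d) {lam mu k a c e : ℂ}
    (h : ∀ x y : ℂ, criticalForm d mu (x, y) = k * criticalForm d lam (a * x, c * x + e * y)) :
    lam ^ d = mu ^ d := by
  have hd0 : d ≠ 0 := by omega
  have hd1 : d - 1 ≠ 0 := by omega
  simp only [criticalForm] at h
  have hke : k * e ^ d = 1 := by simpa [hd0, hd1] using (h 0 1).symm
  have hk : k ≠ 0 := left_ne_zero_of_mul_eq_one hke
  have he : e ≠ 0 := by
    rintro rfl
    simp [hd0] at hke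
  have hc : c = 0 := by
    open Polynomial in
    have hpoly : k • (X + C (-c)) ^ d + C (mu / e) * (X + C (-c)) + C 1 =
        k • X ^ d + C (k * lam * a ^ (d - 1)) * X + C (k * a ^ d) := by
      refine Polynomial.funext fun z => ?_
      have hz := h 1 ((z - c) / e)
      have hcz : c * 1 + e * ((z - c) / e) = z := by field_simp; ring
      rw [hcz, div_pow] at hz
      have hke' : (z - c) ^ d / e ^ d = k * (z - c) ^ d := by
        field_simp
        linear_combination -(z - c) ^ d * hke
      rw [hke'] at hz
      simp only [eval_add, eval_mul, eval_smul, eval_pow, eval_X, eval_C, smul_eq_mul]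
      simp only [one_pow, mul_one] at hz
      linear_combination hz
    have hcoeff := congrArg (fun p => Polynomial.coeff p (d - 1)) hpoly
    have h1 : d - 1 ≠ d := by omega
    have h2 : (1 : ℕ) ≠ d - 1 := by omega
    have h3 : d - (d - 1) = 1 := by omega
    have h4 : d.choose (d - 1) = d := by
      rw [Nat.choose_symm_of_eq_add (b := 1) (by omega), Nat.choose_one_right]
    simp only [Polynomial.coeff_add, Polynomial.coeff_smul, Polynomial.coeff_X_add_C_pow,
      Polynomial.coeff_C_mul, Polynomial.coeff_X_pow, Polynomial.coeff_C, Polynomial.coeff_X,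
      h1, h2, hd1, h3, h4, if_false, smul_eq_mul, mul_zero, add_zero, pow_one] at hcoeff
    simpa [hk, hd0] using hcoeff
  subst hc
  have hka : k * a ^ d = 1 := by simpa [hd0] using (h 1 0).symm
  have hmu : mu = k * lam * a ^ (d - 1) * e := by
    have := h 1 1
    simp only [one_pow, mul_one, zero_add] at this
    linear_combination this + hke + hka
  have hpow : k ^ d = k ^ (d - 1) * k := by rw [← pow_succ, Nat.sub_add_cancel (by omega)]
  calc lam ^ d = (k * a ^ d) ^ (d - 1) * (k * e ^ d) * lam ^ d := by rw [hka, hke]; simp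
    _ = mu ^ d := by
      rw [hmu]
      simp only [mul_pow, hpow, ← pow_mul]
      rw [mul_comm d (d - 1)]
      ring

lemma IsPolyMap.contDiff {f : ℂ × ℂ → ℂ × ℂ} (hf : IsPolyMap f) : ContDiff ℂ 1 f := by
  obtain ⟨P, Q, h⟩ := hf
  have key : ∀ R : MvPolynomial (Fin 2) ℂ,
      ContDiff ℂ 1 fun p : ℂ × ℂ => MvPolynomial.eval ![p.1, p.2] R := by
    intro R
    induction R using MvPolynomial.induction_on with
    | C a => simpa using contDiff_const
    | add p q hp hq => simpa using hp.add hq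
    | mul_X p i hp =>
      simp only [map_mul, MvPolynomial.eval_X]
      refine hp.mul ?_
      fin_cases i
      · exact contDiff_fst
      · exact contDiff_snd
  rw [funext h]
  exact (key P).prodMk (key Q)

lemma fderiv_symm_comp_fderiv {Φ : ℂ × ℂ ≃ ℂ × ℂ} (hΦ : IsPolyAut Φ) (p : ℂ × ℂ) :
    (fderiv ℂ Φ.symm (Φ p)).comp (fderiv ℂ Φ p) = ContinuousLinearMap.id ℂ (ℂ × ℂ) := by
  rw [← fderiv_comp p (hΦ.2.contDiff.differentiable one_ne_zero _)
    (hΦ.1.contDiff.differentiable one_ne_zero _), Φ.symm_comp_self, fderiv_id]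

lemma det_fderiv_ne_zero {Φ : ℂ × ℂ ≃ ℂ × ℂ} (hΦ : IsPolyAut Φ) (p : ℂ × ℂ) :
    (fderiv ℂ Φ p).det ≠ 0 := by
  have h := congrArg ContinuousLinearMap.det (fderiv_symm_comp_fderiv hΦ p)
  simp only [ContinuousLinearMap.det, ContinuousLinearMap.toLinearMap_comp,
    ContinuousLinearMap.coe_id, LinearMap.det_comp, LinearMap.det_id] at h
  exact right_ne_zero_of_mul_eq_one h

/-- The derivative of `f_{d,λ}` is lower triangular with diagonal entries `1`, `F_{d,λ}`. -/
lemma exists_hasFDerivAt_fdl (d : ℕ) (lam : ℂ) (p : ℂ × ℂ) :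
    ∃ (D : ℂ × ℂ →L[ℂ] ℂ × ℂ) (r : ℂ), HasFDerivAt (fdl d lam) D p ∧
      ∀ v, D v = (v.1, r * v.1 + criticalForm d lam p * v.2) := by
  have h1 : HasFDerivAt (fun p : ℂ × ℂ => p.1) (ContinuousLinearMap.fst ℂ ℂ ℂ) p :=
    hasFDerivAt_fst
  have h2 : HasFDerivAt (fun p : ℂ × ℂ => p.2) (ContinuousLinearMap.snd ℂ ℂ ℂ) p :=
    hasFDerivAt_snd
  have hA := ((h2.pow (d + 1)).mul_const ((d + 1 : ℂ)⁻¹)).add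
    ((((h1.pow (d - 1)).const_mul (lam / 2)).mul (h2.pow 2)).add ((h1.pow d).mul h2))
  refine ⟨_, lam / 2 * (((d - 1 : ℕ) : ℂ) * p.1 ^ (d - 1 - 1)) * p.2 ^ 2 +
    d * p.1 ^ (d - 1) * p.2, (h1.prodMk hA).congr_of_eventuallyEq
      (Eventually.of_forall fun q => ?_), fun v => ?_⟩
  · simp only [fdl, div_eq_mul_inv, Prod.mk.injEq, true_and, Pi.add_apply, Pi.mul_apply]
    ring
  · have hd1 : (d : ℂ) + 1 ≠ 0 := by exact_mod_cast d.succ_ne_zero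
    simp [criticalForm]
    field_simp
    ring

lemma det_of_apply_eq {D : ℂ × ℂ →L[ℂ] ℂ × ℂ} {r s : ℂ}
    (h : ∀ v, D v = (v.1, r * v.1 + s * v.2)) : D.det = s := by
  rw [ContinuousLinearMap.det, ← LinearMap.det_toMatrix (Module.Basis.finTwoProd ℂ),
    Matrix.det_fin_two]
  simp [LinearMap.toMatrix_apply, h]

lemma det_fderiv_fdl (d : ℕ) (lam : ℂ) (p : ℂ × ℂ) :
    (fderiv ℂ (fdl d lam) p).det = criticalForm d lam p := by
  obtain ⟨D, r, hD, h⟩ := exists_hasFDerivAt_fdl d lam p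
  rw [hD.fderiv, det_of_apply_eq h]

lemma differentiable_fdl (d : ℕ) (lam : ℂ) : Differentiable ℂ (fdl d lam) :=
  fun p => (exists_hasFDerivAt_fdl d lam p).elim fun _ ⟨_, hD, _⟩ => hD.differentiableAt

lemma fderiv_fdl_zero {d : ℕ} (hd : d ≠ 0) (lam : ℂ) (v : ℂ × ℂ) :
    ((fderiv ℂ (fdl d lam) 0) v).1 = v.1 ∧ fderiv ℂ (fdl d lam) 0 (0, 1) = 0 := by
  obtain ⟨D, r, hD, h⟩ := exists_hasFDerivAt_fdl d lam 0
  rw [hD.fderiv]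
  simp [h, criticalForm, hd]

/-- The chain rule for an equivalence of `f_{d,λ}` with `f_{d,μ}`. -/
lemma fderiv_fdl_eq {d : ℕ} {lam mu : ℂ} {Φ₁ Φ₂ : ℂ × ℂ ≃ ℂ × ℂ}
    (h₁ : IsPolyAut Φ₁) (h₂ : IsPolyAut Φ₂)
    (h : ∀ p, fdl d mu p = Φ₂ (fdl d lam (Φ₁ p))) (p : ℂ × ℂ) :
    fderiv ℂ (fdl d mu) p = (fderiv ℂ Φ₂ (fdl d lam (Φ₁ p))).comp
      ((fderiv ℂ (fdl d lam) (Φ₁ p)).comp (fderiv ℂ Φ₁ p)) := by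
  have d₁ := (h₁.1.contDiff.differentiable one_ne_zero p).hasFDerivAt
  have d₂ := (h₂.1.contDiff.differentiable one_ne_zero (fdl d lam (Φ₁ p))).hasFDerivAt
  have dl := (differentiable_fdl d lam (Φ₁ p)).hasFDerivAt
  rw [funext h]
  exact (d₂.comp p (dl.comp p d₁)).fderiv

lemma criticalForm_eq_mul {d : ℕ} {lam mu : ℂ} {Φ₁ Φ₂ : ℂ × ℂ ≃ ℂ × ℂ}
    (h₁ : IsPolyAut Φ₁) (h₂ : IsPolyAut Φ₂)
    (h : ∀ p, fdl d mu p = Φ₂ (fdl d lam (Φ₁ p))) (p : ℂ × ℂ) :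
    criticalForm d mu p = (fderiv ℂ Φ₂ (fdl d lam (Φ₁ p))).det * (fderiv ℂ Φ₁ p).det *
      criticalForm d lam (Φ₁ p) := by
  have hdet := congrArg ContinuousLinearMap.det (fderiv_fdl_eq h₁ h₂ h p)
  rw [det_fderiv_fdl] at hdet
  rw [hdet, ← det_fderiv_fdl d lam (Φ₁ p)]
  simp only [ContinuousLinearMap.det, ContinuousLinearMap.toLinearMap_comp, LinearMap.det_comp]
  ring

lemma tendsto_inv_smul_sub {E : Type*} [NormedAddCommGroup E] [NormedSpace ℂ E] {f : ℂ × ℂ → E}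
    (hf : DifferentiableAt ℂ f 0) (v : ℂ × ℂ) :
    Tendsto (fun t : ℂ => t⁻¹ • (f (t • v) - f 0)) (𝓝[≠] 0) (𝓝 (fderiv ℂ f 0 v)) := by
  have h := hf.hasFDerivAt.hasLineDerivAt v
  simpa using h.tendsto_slope_zero

/-- If `F_{d,μ}` is, up to a continuous unit, the pullback of the square-free form `F_{d,λ}` under
a polynomial automorphism, then this automorphism fixes the origin. -/
lemma map_zero_of_criticalForm_eq {d : ℕ} (hd : 2 ≤ d) {lam mu : ℂ} (hlam : IsSquareFreeForm d lam)
    {Φ : ℂ × ℂ ≃ ℂ × ℂ} (hΦ : IsPolyAut Φ) {u : ℂ × ℂ → ℂ} (hu : Continuous u)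
    (hu0 : ∀ p, u p ≠ 0) (h : ∀ p, criticalForm d mu p = u p * criticalForm d lam (Φ p)) :
    Φ 0 = 0 := by
  have hdiff : Differentiable ℂ (criticalForm d lam) := by
    unfold criticalForm
    fun_prop
  have hdΦ := hΦ.1.contDiff.differentiable one_ne_zero
  have hF0 : criticalForm d lam (Φ 0) = 0 := by
    have h0 := h 0
    rw [show criticalForm d mu 0 = 0 by simp [criticalForm, show d ≠ 0 by omega]] at h0
    exact (mul_eq_zero.1 h0.symm).resolve_left (hu0 0)
  have hcomp : ∀ v, fderiv ℂ (criticalForm d lam ∘ Φ) 0 v = 0 := by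
    intro v
    refine tendsto_nhds_unique (tendsto_inv_smul_sub ((hdiff _).comp 0 (hdΦ 0)) v) ?_
    have hc : Continuous fun t : ℂ => t ^ (d - 1) * criticalForm d mu v * (u (t • v))⁻¹ :=
      (by fun_prop : Continuous fun t : ℂ => t ^ (d - 1) * criticalForm d mu v).mul
        ((hu.comp (by fun_prop)).inv₀ fun t => hu0 _)
    have ht := (hc.tendsto 0).mono_left (nhdsWithin_le_nhds (s := {0}ᶜ))
    simp only [zero_pow (show d - 1 ≠ 0 by omega), zero_mul] at ht
    refine ht.congr' ?_
    filter_upwards [self_mem_nhdsWithin] with t (ht0 : t ≠ 0)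
    have htv := h (t • v)
    rw [criticalForm_smul (by omega)] at htv
    have hut := hu0 (t • v)
    have hpow : t ^ d = t * t ^ (d - 1) := by rw [← pow_succ', Nat.sub_add_cancel (by omega)]
    rw [hpow] at htv
    simp only [Function.comp_apply, hF0, sub_zero, smul_eq_mul]
    field_simp
    linear_combination htv
  refine eq_zero_of_tendsto_criticalForm hd hlam hF0 fun w => ?_
  have hline := ((hdiff (Φ 0)).hasFDerivAt.hasLineDerivAt w).tendsto_slope_zero
  have hw : fderiv ℂ (criticalForm d lam) (Φ 0) w = 0 := by
    have hinv := fderiv_symm_comp_fderiv (Φ := Φ.symm) ⟨hΦ.2, hΦ.1⟩ (Φ 0)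
    rw [Φ.symm_symm, Φ.symm_apply_apply] at hinv
    have := hcomp (fderiv ℂ Φ.symm (Φ 0) w)
    rw [fderiv_comp 0 (hdiff _) (hdΦ 0)] at this
    rw [← this, ContinuousLinearMap.comp_apply]
    exact congrArg _ (DFunLike.congr_fun hinv w).symm
  simpa [hF0, hw] using hline

/-- Passing to leading forms at a fixed origin. -/
lemma criticalForm_eq_mul_fderiv {d : ℕ} (hd : 1 ≤ d) {lam mu : ℂ} {Φ : ℂ × ℂ → ℂ × ℂ}
    (hΦ : DifferentiableAt ℂ Φ 0) (hΦ0 : Φ 0 = 0) {u : ℂ × ℂ → ℂ} (hu : Continuous u)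
    (h : ∀ p, criticalForm d mu p = u p * criticalForm d lam (Φ p)) (v : ℂ × ℂ) :
    criticalForm d mu v = u 0 * criticalForm d lam (fderiv ℂ Φ 0 v) := by
  have hslope := tendsto_inv_smul_sub hΦ v
  simp only [hΦ0, sub_zero] at hslope
  have hut : Tendsto (fun t : ℂ => u (t • v)) (𝓝[≠] 0) (𝓝 (u 0)) := by
    have := ((hu.comp (by fun_prop : Continuous fun t : ℂ => t • v)).tendsto 0).mono_left
      (nhdsWithin_le_nhds (s := {0}ᶜ))
    simpa [Function.comp_def] using this
  refine tendsto_nhds_unique (Tendsto.congr' ?_ tendsto_const_nhds)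
    (hut.mul (((continuous_criticalForm d lam).tendsto _).comp hslope))
  filter_upwards [self_mem_nhdsWithin] with t (ht : t ≠ 0)
  have htv := h (t • v)
  rw [criticalForm_smul hd] at htv
  simp only [Function.comp_apply, criticalForm_smul hd, inv_pow]
  field_simp
  linear_combination htv

/-- For `d ≥ 4` and `λ, μ ∈ Γ_d` with `λ^d ≠ μ^d`, the maps
`f_{d,λ}` and `f_{d,μ}` are not equivalent under pre- and post-composition with
polynomial automorphisms of `ℂ²`. -/
theorem stmt_10 (d : ℕ) (hd : 4 ≤ d) (lam mu : ℂ)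
    (hlam : IsSquareFreeForm d lam) (hmu : IsSquareFreeForm d mu)
    (hne : lam ^ d ≠ mu ^ d) :
    ¬ ∃ Φ₁ Φ₂ : ℂ × ℂ ≃ ℂ × ℂ, IsPolyAut Φ₁ ∧ IsPolyAut Φ₂ ∧
      ∀ p : ℂ × ℂ, fdl d mu p = Φ₂ (fdl d lam (Φ₁ p)) := by
  rintro ⟨Φ₁, Φ₂, h₁, h₂, h⟩
  have hd0 : d ≠ 0 := by omega
  set u : ℂ × ℂ → ℂ := fun p => (fderiv ℂ Φ₂ (fdl d lam (Φ₁ p))).det * (fderiv ℂ Φ₁ p).det with hu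
  have huc : Continuous u :=
    (ContinuousLinearMap.continuous_det.comp
      ((h₂.1.contDiff.continuous_fderiv one_ne_zero).comp
        ((differentiable_fdl d lam).continuous.comp h₁.1.contDiff.continuous))).mul
      (ContinuousLinearMap.continuous_det.comp (h₁.1.contDiff.continuous_fderiv one_ne_zero))
  have hu0 : ∀ p, u p ≠ 0 := fun p =>
    mul_ne_zero (det_fderiv_ne_zero h₂ _) (det_fderiv_ne_zero h₁ _)
  have hF : ∀ p, criticalForm d mu p = u p * criticalForm d lam (Φ₁ p) :=
    criticalForm_eq_mul h₁ h₂ h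
  have hΦ0 : Φ₁ 0 = 0 := map_zero_of_criticalForm_eq (by omega) hlam h₁ huc hu0 hF
  have hlead := criticalForm_eq_mul_fderiv (by omega)
    (h₁.1.contDiff.differentiable one_ne_zero 0) hΦ0 huc hF
  set A := fderiv ℂ Φ₁ 0 with hA
  have hker : (A (0, 1)).1 = 0 := by
    have hchain := DFunLike.congr_fun (fderiv_fdl_eq h₁ h₂ h 0) (0, 1)
    rw [(fderiv_fdl_zero hd0 mu 0).2, hΦ0] at hchain
    have hinv := DFunLike.congr_fun (fderiv_symm_comp_fderiv h₂ (fdl d lam 0))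
      (fderiv ℂ (fdl d lam) 0 (A (0, 1)))
    simp only [ContinuousLinearMap.comp_apply, ← hA] at hchain hinv
    rw [← hchain, map_zero] at hinv
    rw [← (fderiv_fdl_zero hd0 lam (A (0, 1))).1]
    exact congrArg Prod.fst hinv.symm
  refine hne (pow_eq_pow_of_criticalForm_eq (by omega) (k := u 0) (a := (A (1, 0)).1)
    (c := (A (1, 0)).2) (e := (A (0, 1)).2) fun x y => ?_)
  have hxy : A (x, y) = x • A (1, 0) + y • A (0, 1) := by
    rw [← map_smul, ← map_smul, ← map_add]
    simp
  rw [hlead, hxy]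
  congr 2
  ext <;> simp [hker, mul_comm]
end

section
/- Let G ⊂ GL(2,ℂ) be a finite complex reflection group. Then there exist two algebraically independent homogeneous polynomials φ₁, φ₂ ∈ ℂ[x,y]^G with |G| = deg(φ₁)·deg(φ₂) if and only if there exist two algebraically independent homogeneous G-invariant polynomials φ₁, φ₂ such that 1, φ₁, φ₂ generate ℂ[x,y]^G as a ℂ-algebra. -/
open MvPolynomial

/-- A polynomial is `G`-invariant (as a function on `ℂ²`). -/
def IsInvariantPoly (G : Subgroup (GL (Fin 2) ℂ)) (p : MvPolynomial (Fin 2) ℂ) : Prop :=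
  ∀ g ∈ G, ∀ x : Fin 2 → ℂ,
    eval (Matrix.mulVec (g : Matrix (Fin 2) (Fin 2) ℂ) x) p = eval x p

/-- The pairs of natural numbers with sum at most `n`. -/
def triangle (n : ℕ) : Finset (ℕ × ℕ) :=
  (Finset.range (n + 1)).biUnion Finset.HasAntidiagonal.antidiagonal

theorem mem_triangle {n : ℕ} {p : ℕ × ℕ} : p ∈ triangle n ↔ p.1 + p.2 ≤ n := by
  simp [triangle]

theorem two_mul_card_triangle (n : ℕ) : 2 * (triangle n).card = (n + 1) * (n + 2) := by
  rw [triangle, Finset.card_biUnion]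
  · simp only [Finset.Nat.card_antidiagonal]
    induction n with
    | zero => simp
    | succ n ih => rw [Finset.sum_range_succ, mul_add, ih]; ring
  · intro i _ j _ hij
    rw [Function.onFun, Finset.disjoint_left]
    intro p hp hq
    rw [Finset.HasAntidiagonal.mem_antidiagonal] at hp hq
    omega

theorem le_sq_of_forall_quadratic_le {A T C : ℕ}
    (h : ∀ M : ℕ, A * ((M + 1) * (M + 2)) ≤ (T * M + C + 1) * (T * M + C + 2)) :
    A ≤ T ^ 2 := by
  by_contra! hA
  obtain ⟨k, rfl⟩ := Nat.exists_eq_add_of_lt hA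
  have := h ((2 * C + 3) * T + (C + 1) * (C + 2))
  generalize hM : (2 * C + 3) * T + (C + 1) * (C + 2) = M at this
  have h1 : 1 ≤ M := by nlinarith
  have h2 : M * M = (2 * C + 3) * T * M + (C + 1) * (C + 2) * M := by
    nth_rewrite 1 [← hM]; ring
  have h3 : (C + 1) * (C + 2) * 1 ≤ (C + 1) * (C + 2) * M := Nat.mul_le_mul_left _ h1
  have h4 : 0 ≤ k * ((M + 1) * (M + 2)) := Nat.zero_le _
  have h5 : 0 ≤ T ^ 2 * M := Nat.zero_le _
  nlinarith

theorem le_of_forall_quadratic_le {D N c : ℕ}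
    (h : ∀ M : ℕ, (D * M + 1) * (D * M + 2) ≤ N * D * ((M + c + 1) * (M + c + 2))) :
    D ≤ N := by
  by_contra! hN
  have := h (N * ((2 * c + 3) + (c + 1) * (c + 2)))
  generalize hM : N * ((2 * c + 3) + (c + 1) * (c + 2)) = M at this
  obtain rfl | hN0 := Nat.eq_zero_or_pos N
  · simp at this
  have h1 : 1 ≤ M := by rw [← hM]; exact Nat.mul_pos hN0 (by positivity)
  have h2 : D * (M * M) = N * D * ((2 * c + 3) * M + (c + 1) * (c + 2) * M) := by
    nth_rewrite 1 [← hM]; ring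
  have h3 : N * D * ((c + 1) * (c + 2) * 1) ≤ N * D * ((c + 1) * (c + 2) * M) := by gcongr
  have h4 : D * ((N + 1) * (M * M)) ≤ D * (D * (M * M)) := by gcongr; omega
  nlinarith [Nat.zero_le (D * M)]

theorem X_pow_mul_X_pow_eq_monomial (m : Fin 2 →₀ ℕ) :
    (X 0 ^ m 0 * X 1 ^ m 1 : MvPolynomial (Fin 2) ℂ) = monomial m 1 := by
  rw [monomial_eq, Finsupp.prod_fintype _ _ (by simp), Fin.prod_univ_two]
  simp

theorem linearIndependent_X_pow_mul_X_pow :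
    LinearIndependent ℂ (fun p : ℕ × ℕ => (X 0 ^ p.1 * X 1 ^ p.2 : MvPolynomial (Fin 2) ℂ)) := by
  have h := (basisMonomials (Fin 2) ℂ).linearIndependent.comp
    (fun p : ℕ × ℕ => Finsupp.equivFunOnFinite.symm ![p.1, p.2]) (by
      intro p q h
      have h := Finsupp.equivFunOnFinite.symm.injective h
      exact Prod.ext (congrFun h 0) (congrFun h 1))
  have e : (fun p : ℕ × ℕ => (X 0 ^ p.1 * X 1 ^ p.2 : MvPolynomial (Fin 2) ℂ)) =
      basisMonomials (Fin 2) ℂ ∘ fun p : ℕ × ℕ =>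
        Finsupp.equivFunOnFinite.symm ![p.1, p.2] := by
    ext1 p
    simp [← X_pow_mul_X_pow_eq_monomial]
  rw [e]
  exact h

/-- The bivariate monomials of degree at most `n`. -/
noncomputable def monomialsUpTo (n : ℕ) : Finset (MvPolynomial (Fin 2) ℂ) :=
  (triangle n).image fun q : ℕ × ℕ => X 0 ^ q.1 * X 1 ^ q.2

theorem mem_span_of_totalDegree_le {n : ℕ} {p : MvPolynomial (Fin 2) ℂ}
    (hp : p.totalDegree ≤ n) :
    p ∈ Submodule.span ℂ (monomialsUpTo n : Set (MvPolynomial (Fin 2) ℂ)) := by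
  rw [p.as_sum]
  refine Submodule.sum_mem _ fun m hm => ?_
  rw [← mul_one (coeff m p), ← smul_eq_mul, ← smul_monomial, ← X_pow_mul_X_pow_eq_monomial]
  refine Submodule.smul_mem _ _ (Submodule.subset_span ?_)
  refine Finset.mem_coe.2 (Finset.mem_image_of_mem
    (fun q : ℕ × ℕ => (X 0 ^ q.1 * X 1 ^ q.2 : MvPolynomial (Fin 2) ℂ)) (a := (m 0, m 1)) ?_)
  rw [mem_triangle]
  have := (le_totalDegree hm).trans hp
  rwa [Finsupp.sum_fintype _ _ (by simp), Fin.sum_univ_two] at this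

theorem card_le_card_triangle {ι : Type*} [Fintype ι] {v : ι → MvPolynomial (Fin 2) ℂ}
    (hv : LinearIndependent ℂ v) {n : ℕ} (hn : ∀ i, (v i).totalDegree ≤ n) :
    Fintype.card ι ≤ (triangle n).card := by
  have hle : Submodule.span ℂ (Set.range v) ≤ Submodule.span ℂ (monomialsUpTo n) :=
    Submodule.span_le.2 (by rintro _ ⟨i, rfl⟩; exact mem_span_of_totalDegree_le (hn i))
  rw [← finrank_span_eq_card hv]
  exact (Submodule.finrank_mono hle).trans
    ((finrank_span_finset_le_card (R := ℂ) _).trans Finset.card_image_le)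

/-- A linearly independent family indexed by finitely many copies of `ℕ × ℕ`, in which degrees
grow with slope `T`, consists of at most `T ^ 2` copies. -/
theorem card_le_sq_of_linearIndependent {ι : Type*} [Fintype ι]
    {v : ι × (ℕ × ℕ) → MvPolynomial (Fin 2) ℂ} (hv : LinearIndependent ℂ v) {T C : ℕ}
    (hdeg : ∀ i p, (v (i, p)).totalDegree ≤ T * (p.1 + p.2) + C) :
    Fintype.card ι ≤ T ^ 2 := by
  refine le_sq_of_forall_quadratic_le (C := C) fun M => ?_
  have h := card_le_card_triangle (n := T * M + C)
    (hv.comp (fun x : ι × triangle M => (x.1, x.2.1)) (by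
      intro x y h
      simp only [Prod.mk.injEq] at h
      exact Prod.ext h.1 (Subtype.ext h.2))) (by
      rintro ⟨i, p, hp⟩
      rw [mem_triangle] at hp
      refine (hdeg i p).trans ?_
      gcongr)
  rw [Fintype.card_prod, Fintype.card_coe] at h
  rw [← two_mul_card_triangle, add_assoc, add_assoc, ← add_assoc (T * M), ← add_assoc (T * M),
    ← two_mul_card_triangle]
  linarith

/-- Precomposition of a polynomial function with the linear map given by a matrix. -/
noncomputable def linearSubst (A : Matrix (Fin 2) (Fin 2) ℂ) :
    MvPolynomial (Fin 2) ℂ →ₐ[ℂ] MvPolynomial (Fin 2) ℂ :=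
  aeval fun i => ∑ j, C (A i j) * X j

theorem eval_linearSubst (A : Matrix (Fin 2) (Fin 2) ℂ) (x : Fin 2 → ℂ)
    (p : MvPolynomial (Fin 2) ℂ) : eval x (linearSubst A p) = eval (A.mulVec x) p := by
  induction p using MvPolynomial.induction_on with
  | C a => simp [linearSubst]
  | add p q hp hq => simp [hp, hq]
  | mul_X p i hp =>
    have hX : eval x (linearSubst A (X i)) = eval (A.mulVec x) (X i) := by
      fin_cases i <;> simp [linearSubst]
    rw [map_mul, eval_mul, hp, hX, eval_mul]

theorem linearSubst_mul (A B : Matrix (Fin 2) (Fin 2) ℂ) (p : MvPolynomial (Fin 2) ℂ) :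
    linearSubst (A * B) p = linearSubst B (linearSubst A p) := by
  refine MvPolynomial.funext fun x => ?_
  simp only [eval_linearSubst, Matrix.mulVec_mulVec]

theorem linearSubst_one (p : MvPolynomial (Fin 2) ℂ) : linearSubst 1 p = p :=
  MvPolynomial.funext fun x => by rw [eval_linearSubst, Matrix.one_mulVec]

theorem totalDegree_linearSubst_le (A : Matrix (Fin 2) (Fin 2) ℂ) (p : MvPolynomial (Fin 2) ℂ) :
    (linearSubst A p).totalDegree ≤ p.totalDegree := by
  have hform (i : Fin 2) :
      (∑ j, C (A i j) * X j : MvPolynomial (Fin 2) ℂ).IsHomogeneous 1 :=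
    IsHomogeneous.sum _ _ _ fun j _ => by
      simpa using (isHomogeneous_C (Fin 2) (A i j)).mul (isHomogeneous_X ℂ j)
  conv_lhs => rw [p.as_sum, map_sum]
  refine totalDegree_finsetSum_le fun m hm => ?_
  refine le_trans ?_ (le_totalDegree hm)
  have h := (isHomogeneous_monomial (n := m.degree) (coeff m p) rfl).aeval _ hform
  simpa [Finsupp.degree_eq_sum, Finsupp.sum_fintype, linearSubst] using h.totalDegree_le

/-- The subalgebra of invariant polynomials. -/
def invariantSubalgebra (G : Subgroup (GL (Fin 2) ℂ)) :
    Subalgebra ℂ (MvPolynomial (Fin 2) ℂ) where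
  carrier := {p | IsInvariantPoly G p}
  mul_mem' hp hq g hg x := by rw [eval_mul, eval_mul, hp g hg x, hq g hg x]
  add_mem' hp hq g hg x := by rw [eval_add, eval_add, hp g hg x, hq g hg x]
  algebraMap_mem' r g hg x := by simp

theorem linearSubst_eq_self {G : Subgroup (GL (Fin 2) ℂ)} {p : MvPolynomial (Fin 2) ℂ}
    (hp : p ∈ invariantSubalgebra G) (g : G) :
    linearSubst ((g : GL (Fin 2) ℂ) : Matrix (Fin 2) (Fin 2) ℂ) p = p :=
  MvPolynomial.funext fun x => by rw [eval_linearSubst, hp g g.2 x]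

/-- The sum of the translates of a polynomial under a finite group. -/
noncomputable def orbitTrace (G : Subgroup (GL (Fin 2) ℂ)) [Fintype G] :
    MvPolynomial (Fin 2) ℂ →ₗ[ℂ] MvPolynomial (Fin 2) ℂ :=
  ∑ g : G, (linearSubst ((g : GL (Fin 2) ℂ) : Matrix (Fin 2) (Fin 2) ℂ)).toLinearMap

theorem orbitTrace_apply (G : Subgroup (GL (Fin 2) ℂ)) [Fintype G] (p : MvPolynomial (Fin 2) ℂ) :
    orbitTrace G p =
      ∑ g : G, linearSubst ((g : GL (Fin 2) ℂ) : Matrix (Fin 2) (Fin 2) ℂ) p := by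
  simp [orbitTrace]

theorem orbitTrace_mem (G : Subgroup (GL (Fin 2) ℂ)) [Fintype G] (p : MvPolynomial (Fin 2) ℂ) :
    orbitTrace G p ∈ invariantSubalgebra G := by
  suffices hinv : IsInvariantPoly G (orbitTrace G p) from hinv
  intro h hh x
  have hsum : linearSubst (h : Matrix (Fin 2) (Fin 2) ℂ) (orbitTrace G p) = orbitTrace G p := by
    rw [orbitTrace_apply, map_sum]
    simp only [← linearSubst_mul]
    exact Fintype.sum_equiv (Equiv.mulRight (⟨h, hh⟩ : G)) _
      (fun g : G => linearSubst ((g : GL (Fin 2) ℂ) : Matrix (Fin 2) (Fin 2) ℂ) p)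
      fun g => by simp
  rw [← eval_linearSubst, hsum]

theorem totalDegree_orbitTrace_le (G : Subgroup (GL (Fin 2) ℂ)) [Fintype G]
    (p : MvPolynomial (Fin 2) ℂ) : (orbitTrace G p).totalDegree ≤ p.totalDegree := by
  rw [orbitTrace_apply]
  exact totalDegree_finsetSum_le fun g _ => totalDegree_linearSubst_le _ p

theorem exists_injective_linearSubst (G : Subgroup (GL (Fin 2) ℂ)) [Finite G] :
    ∃ t : MvPolynomial (Fin 2) ℂ, t.totalDegree ≤ 1 ∧ Function.Injective fun g : G =>
      linearSubst ((g : GL (Fin 2) ℂ) : Matrix (Fin 2) (Fin 2) ℂ) t := by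
  let bad (q : G × G) : Set ℂ := {c | q.1 ≠ q.2 ∧ ∀ j,
    (q.1 : GL (Fin 2) ℂ) 0 j + c * (q.1 : GL (Fin 2) ℂ) 1 j =
      (q.2 : GL (Fin 2) ℂ) 0 j + c * (q.2 : GL (Fin 2) ℂ) 1 j}
  have hbad (q : G × G) : (bad q).Subsingleton := by
    rintro c ⟨hne, hc⟩ c' ⟨-, hc'⟩
    by_contra hcc
    have h1 (j : Fin 2) : (q.1 : GL (Fin 2) ℂ) 1 j = (q.2 : GL (Fin 2) ℂ) 1 j :=
      mul_left_cancel₀ (sub_ne_zero.2 hcc) (by linear_combination hc j - hc' j)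
    refine hne (Subtype.ext (Units.ext (Matrix.ext fun i j => ?_)))
    fin_cases i
    · have := hc j
      rw [h1] at this
      exact add_right_cancel this
    · exact h1 j
  obtain ⟨c, hc⟩ := (Set.finite_iUnion fun q => (hbad q).finite).exists_notMem
  have htransl (A : Matrix (Fin 2) (Fin 2) ℂ) :
      linearSubst A (X 0 + C c * X 1) = ∑ j, C (A 0 j + c * A 1 j) * X j := by
    simp [linearSubst, Fin.sum_univ_two]
    ring
  refine ⟨X 0 + C c * X 1, ?_, fun g h hgh => ?_⟩
  · refine (totalDegree_add _ _).trans (max_le (totalDegree_X _).le ?_)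
    refine (totalDegree_mul _ _).trans ?_
    simp
  · by_contra hne
    refine hc (Set.mem_iUnion.2 ⟨(g, h), hne, fun j => ?_⟩)
    simp only [htransl] at hgh
    have := congrArg (eval (Pi.single j (1 : ℂ))) hgh
    fin_cases j <;> simpa using this

section Vandermonde

variable {G : Subgroup (GL (Fin 2) ℂ)} {t : MvPolynomial (Fin 2) ℂ}

theorem linearIndependent_pow_of_injective [Finite G] (ht : Function.Injective fun g : G =>
      linearSubst ((g : GL (Fin 2) ℂ) : Matrix (Fin 2) (Fin 2) ℂ) t) :
    LinearIndependent (invariantSubalgebra G) (fun i : Fin (Nat.card G) => t ^ (i : ℕ)) := by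
  rw [Fintype.linearIndependent_iff]
  intro r hr i
  let e := (Finite.equivFin G).symm
  have h := Matrix.eq_zero_of_forall_index_sum_pow_mul_eq_zero
    (v := fun i => (r i : MvPolynomial (Fin 2) ℂ)) (ht.comp e.injective) (fun j => ?_)
  · exact Subtype.ext (congrFun h i)
  · have := congrArg (linearSubst ((e j : GL (Fin 2) ℂ) : Matrix (Fin 2) (Fin 2) ℂ)) hr
    rw [map_sum, map_zero] at this
    rw [← this]
    refine Finset.sum_congr rfl fun i _ => ?_
    rw [Subalgebra.smul_def, smul_eq_mul, map_mul, map_pow, linearSubst_eq_self (r i).2, mul_comm]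
    rfl

theorem eq_zero_of_forall_orbitTrace_mul_pow_eq_zero [Fintype G]
    (ht : Function.Injective fun g : G =>
      linearSubst ((g : GL (Fin 2) ℂ) : Matrix (Fin 2) (Fin 2) ℂ) t)
    {s : MvPolynomial (Fin 2) ℂ}
    (hs : ∀ i : Fin (Nat.card G), orbitTrace G (s * t ^ (i : ℕ)) = 0) : s = 0 := by
  let e := (Finite.equivFin G).symm
  have h := Matrix.eq_zero_of_forall_pow_sum_mul_pow_eq_zero
    (v := fun j => linearSubst ((e j : GL (Fin 2) ℂ) : Matrix (Fin 2) (Fin 2) ℂ) s)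
    (ht.comp e.injective) (fun i => ?_)
  · have := congrFun h (e.symm 1)
    simpa [linearSubst_one] using this
  · rw [← hs i, orbitTrace_apply]
    refine Fintype.sum_equiv e _ _ fun j => ?_
    rw [map_mul, map_pow]
    rfl

end Vandermonde

/-- If `f` is the fraction `a / b` in lowest terms over a subring `U` of an integral domain, then
`b` divides the leading coefficient of every polynomial over `U` that vanishes at `f`. -/
theorem dvd_leadingCoeff_of_eval₂_eq_zero {U S : Type*} [CommRing U] [DecompositionMonoid U]
    [CommRing S] {φ : U →+* S} (hφ : Function.Injective φ) {a b : U} {f : S}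
    (hab : IsRelPrime b a) (hf : φ b * f = φ a) {g : Polynomial U} (hg : g.eval₂ φ f = 0) :
    b ∣ g.leadingCoeff := by
  have hsum : ∑ k ∈ Finset.range (g.natDegree + 1),
      g.coeff k * a ^ k * b ^ (g.natDegree - k) = 0 := by
    apply hφ
    rw [map_sum, map_zero, ← mul_zero (φ b ^ g.natDegree), ← hg, Polynomial.eval₂_eq_sum_range,
      Finset.mul_sum]
    refine Finset.sum_congr rfl fun k hk => ?_
    obtain ⟨l, hl⟩ := Nat.exists_eq_add_of_le (Nat.lt_succ_iff.1 (Finset.mem_range.1 hk))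
    rw [hl, Nat.add_sub_cancel_left, map_mul, map_mul, map_pow, map_pow, ← hf]
    ring
  rw [Finset.sum_range_succ, Nat.sub_self, pow_zero, mul_one] at hsum
  refine (hab.pow_right (n := g.natDegree)).dvd_of_dvd_mul_right ?_
  rw [Polynomial.leadingCoeff, eq_neg_of_add_eq_zero_right hsum, dvd_neg]
  refine Finset.dvd_sum fun k hk => dvd_mul_of_dvd_right (dvd_pow_self b ?_) _
  have := Finset.mem_range.1 hk
  omega

/-- The monomials in `T`, `X 0`, `X 1` of the polynomial ring in `T` over the bivariate
polynomials. -/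
noncomputable def towerMonomial (q : ℕ × (ℕ × ℕ)) : Polynomial (MvPolynomial (Fin 2) ℂ) :=
  (X 0 ^ q.2.1 * X 1 ^ q.2.2 : MvPolynomial (Fin 2) ℂ) • Polynomial.X ^ q.1

theorem coeff_towerMonomial (q : ℕ × (ℕ × ℕ)) (k : ℕ) :
    (towerMonomial q).coeff k = if k = q.1 then X 0 ^ q.2.1 * X 1 ^ q.2.2 else 0 := by
  rw [towerMonomial, Polynomial.coeff_smul, Polynomial.coeff_X_pow]
  simp

theorem linearIndependent_towerMonomial : LinearIndependent ℂ towerMonomial := by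
  have h := linearIndependent_smul linearIndependent_X_pow_mul_X_pow
    (Polynomial.basisMonomials (MvPolynomial (Fin 2) ℂ)).linearIndependent
  have e : towerMonomial = (fun p : (ℕ × ℕ) × ℕ =>
      (X 0 ^ p.1.1 * X 1 ^ p.1.2 : MvPolynomial (Fin 2) ℂ) •
        Polynomial.basisMonomials (MvPolynomial (Fin 2) ℂ) p.2) ∘ Prod.swap := by
    ext1 q
    simp [towerMonomial, Polynomial.X_pow_eq_monomial]
  rw [e]
  exact h.comp _ Prod.swap_injective

theorem eval₂_towerMonomial {S : Type*} [CommRing S] [Algebra ℂ S] {φ₁ φ₂ f : S}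
    (q : ℕ × (ℕ × ℕ)) : (towerMonomial q).eval₂ (aeval ![φ₁, φ₂]).toRingHom f =
      f ^ q.1 * (φ₁ ^ q.2.1 * φ₂ ^ q.2.2) := by
  rw [towerMonomial, Polynomial.smul_eq_C_mul, Polynomial.eval₂_mul, Polynomial.eval₂_C,
    Polynomial.eval₂_X_pow, mul_comm]
  simp

/-- Evaluation is injective on the span of a set of monomials that contains no element of the
kernel, so it maps these monomials to a linearly independent family. -/
theorem linearIndependent_eval₂_towerMonomial {S ι : Type*} [CommRing S] [Algebra ℂ S]
    {φ₁ φ₂ f : S} {ρ : ι → ℕ × (ℕ × ℕ)} (hρ : Function.Injective ρ)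
    (hker : ∀ g ∈ Submodule.span ℂ (Set.range (towerMonomial ∘ ρ)),
      g.eval₂ (aeval ![φ₁, φ₂] : MvPolynomial (Fin 2) ℂ →ₐ[ℂ] S).toRingHom f = 0 → g = 0) :
    LinearIndependent ℂ fun i => f ^ (ρ i).1 * (φ₁ ^ (ρ i).2.1 * φ₂ ^ (ρ i).2.2) := by
  let E : Polynomial (MvPolynomial (Fin 2) ℂ) →ₗ[ℂ] S :=
    (Polynomial.eval₂AlgHom (aeval ![φ₁, φ₂]) f fun _ => Commute.all _ _).toLinearMap
  have h := (linearIndependent_towerMonomial.comp ρ hρ).map (f := E) (by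
    rw [Submodule.disjoint_def]
    exact fun g hg hg0 => hker g hg hg0)
  have e : (E ∘ (towerMonomial ∘ ρ)) =
      fun i => f ^ (ρ i).1 * (φ₁ ^ (ρ i).2.1 * φ₂ ^ (ρ i).2.2) :=
    _root_.funext fun i => eval₂_towerMonomial (ρ i)
  rwa [← e]

/-- Index the monomials in `φ₁, φ₂` together with a further family of monomials. -/
def sumIndex (σ : ℕ × ℕ → ℕ × (ℕ × ℕ)) : (ℕ × ℕ) ⊕ (ℕ × ℕ) → ℕ × (ℕ × ℕ) :=
  Sum.elim (fun p => (0, p)) σ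

theorem sumIndex_injective {σ : ℕ × ℕ → ℕ × (ℕ × ℕ)} (hσ : Function.Injective σ)
    (hpos : ∀ p, 0 < (σ p).1) : Function.Injective (sumIndex σ) :=
  Function.Injective.sumElim (fun _ _ h => (Prod.mk.inj h).2) hσ
    fun _ q h => (hpos q).ne (congrArg Prod.fst h)

theorem linearIndependent_of_not_fraction {S : Type*} [CommRing S] [Algebra ℂ S] {φ₁ φ₂ f : S}
    (hφ : AlgebraicIndependent ℂ ![φ₁, φ₂])
    (hf : ∀ a b : MvPolynomial (Fin 2) ℂ,
      aeval ![φ₁, φ₂] b * f = aeval ![φ₁, φ₂] a → b = 0) :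
    LinearIndependent ℂ fun i => f ^ (sumIndex (Prod.mk 1) i).1 *
      (φ₁ ^ (sumIndex (Prod.mk 1) i).2.1 * φ₂ ^ (sumIndex (Prod.mk 1) i).2.2) := by
  refine linearIndependent_eval₂_towerMonomial
    (sumIndex_injective (Prod.mk_right_injective 1) fun _ => one_pos) fun g hg hg0 => ?_
  have hdeg : ∀ k, 1 < k → g.coeff k = 0 := by
    clear hg0
    induction hg using Submodule.span_induction with
    | mem g hg =>
      obtain ⟨i, rfl⟩ := hg
      intro k hk
      rw [Function.comp_apply, coeff_towerMonomial, if_neg]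
      rcases i with p | p <;> simp [sumIndex] <;> omega
    | zero => simp
    | add g h _ _ hg hh =>
      exact fun k hk => by rw [Polynomial.coeff_add, hg k hk, hh k hk, add_zero]
    | smul c g _ hg => exact fun k hk => by rw [Polynomial.coeff_smul, hg k hk, smul_zero]
  rw [Polynomial.eq_X_add_C_of_natDegree_le_one (Polynomial.natDegree_le_iff_coeff_eq_zero.2 hdeg)]
    at hg0 ⊢
  simp only [Polynomial.eval₂_add, Polynomial.eval₂_mul, Polynomial.eval₂_C,
    Polynomial.eval₂_X] at hg0
  have h1 : g.coeff 1 = 0 := hf (-g.coeff 0) _ (by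
    rw [map_neg]
    exact eq_neg_of_add_eq_zero_left hg0)
  have h0 : g.coeff 0 = 0 := hφ (by simpa [h1] using hg0)
  simp [h0, h1]

theorem eq_zero_of_dvd_of_mem_supported {s : Fin 2} {b c : MvPolynomial (Fin 2) ℂ}
    (hs : s ∈ b.vars) (hc : c ∈ supported ℂ {s}ᶜ) (hbc : b ∣ c) : c = 0 := by
  by_contra hc0
  obtain ⟨q, rfl⟩ := hbc
  have hsc : s ∈ (b * q).vars := by
    rw [mem_vars_iff_degreeOf_ne_zero] at hs ⊢
    rw [degreeOf_mul_eq (left_ne_zero_of_mul hc0) (right_ne_zero_of_mul hc0)]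
    omega
  exact mem_supported.1 hc hsc rfl

theorem linearIndependent_of_fraction {S : Type*} [CommRing S] [Algebra ℂ S] {φ₁ φ₂ f : S}
    (hφ : AlgebraicIndependent ℂ ![φ₁, φ₂]) {a b : MvPolynomial (Fin 2) ℂ}
    (hab : IsRelPrime b a) (hf : aeval ![φ₁, φ₂] b * f = aeval ![φ₁, φ₂] a) {s : Fin 2}
    (hs : s ∈ b.vars) {τ : ℕ → ℕ × ℕ} (hτ : Function.Injective τ)
    (hsupp : ∀ j, X 0 ^ (τ j).1 * X 1 ^ (τ j).2 ∈ supported ℂ {s}ᶜ) :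
    let ρ := sumIndex fun p => (p.1 + 1, τ p.2)
    LinearIndependent ℂ fun i => f ^ (ρ i).1 * (φ₁ ^ (ρ i).2.1 * φ₂ ^ (ρ i).2.2) := by
  intro ρ
  refine linearIndependent_eval₂_towerMonomial (sumIndex_injective (fun p q h => ?_)
    fun _ => Nat.succ_pos _) fun g hg hg0 => ?_
  · have h := Prod.mk.inj h
    exact Prod.ext (Nat.succ_injective h.1) (hτ h.2)
  have hcoeff : ∀ k, 0 < k → g.coeff k ∈ supported ℂ {s}ᶜ := by
    clear hg0
    induction hg using Submodule.span_induction with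
    | mem g hg =>
      obtain ⟨i, rfl⟩ := hg
      intro k hk
      rw [Function.comp_apply, coeff_towerMonomial]
      split_ifs with hki
      · rcases i with p | p
        · exact absurd hki hk.ne'
        · exact hsupp p.2
      · exact zero_mem _
    | zero => simp
    | add g h _ _ hg hh => exact fun k hk => add_mem (hg k hk) (hh k hk)
    | smul c g _ hg => exact fun k hk => Subalgebra.smul_mem _ (hg k hk) c
  obtain hdeg | hdeg := Nat.eq_zero_or_pos g.natDegree
  · rw [Polynomial.eq_C_of_natDegree_eq_zero hdeg, Polynomial.eval₂_C] at hg0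
    rw [Polynomial.eq_C_of_natDegree_eq_zero hdeg, hφ (hg0.trans (map_zero _).symm), map_zero]
  · exact Polynomial.leadingCoeff_eq_zero.1 (eq_zero_of_dvd_of_mem_supported hs
      (hcoeff _ hdeg) (dvd_leadingCoeff_of_eval₂_eq_zero hφ hab hf hg0))

theorem adjoin_pair_eq_range_aeval (φ₁ φ₂ : MvPolynomial (Fin 2) ℂ) :
    Algebra.adjoin ℂ {φ₁, φ₂} =
      (aeval ![φ₁, φ₂] : MvPolynomial (Fin 2) ℂ →ₐ[ℂ] MvPolynomial (Fin 2) ℂ).range := by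
  rw [← Algebra.adjoin_range_eq_range_aeval, Matrix.range_cons, Matrix.range_cons,
    Matrix.range_empty, Set.union_empty, Set.singleton_union]

section Rank

variable {G : Subgroup (GL (Fin 2) ℂ)} [Finite G]

/-- The rank bound: adjoining the translates of a generic linear form multiplies the size of a
linearly independent family of invariants by the order of the group. -/
theorem card_mul_card_le_sq {J : Type*} [Fintype J] {b : J × (ℕ × ℕ) → MvPolynomial (Fin 2) ℂ}
    (hb : LinearIndependent ℂ b) (hinv : ∀ i, b i ∈ invariantSubalgebra G) {T C : ℕ}
    (hdeg : ∀ j p, (b (j, p)).totalDegree ≤ T * (p.1 + p.2) + C) :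
    Nat.card G * Fintype.card J ≤ T ^ 2 := by
  obtain ⟨t, ht1, ht⟩ := exists_injective_linearSubst G
  have hb' : LinearIndependent ℂ fun i => (⟨b i, hinv i⟩ : invariantSubalgebra G) :=
    LinearIndependent.of_comp (invariantSubalgebra G).val.toLinearMap hb
  have h := (linearIndependent_smul hb' (linearIndependent_pow_of_injective ht)).comp
    (fun x : (Fin (Nat.card G) × J) × (ℕ × ℕ) => ((x.1.2, x.2), x.1.1)) (by
      rintro ⟨⟨i, j⟩, p⟩ ⟨⟨i', j'⟩, p'⟩ h
      simp only [Prod.mk.injEq] at h ⊢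
      tauto)
  have hle := card_le_sq_of_linearIndependent (T := T) (C := C + Nat.card G) h (by
    rintro ⟨i, j⟩ p
    refine (totalDegree_mul _ _).trans ?_
    rw [← add_assoc]
    refine add_le_add (hdeg j p) ((totalDegree_pow _ _).trans ?_)
    calc (i : ℕ) * t.totalDegree ≤ i * 1 := by gcongr
      _ ≤ Nat.card G := by rw [mul_one]; exact i.2.le)
  simpa using hle

variable {φ₁ φ₂ : MvPolynomial (Fin 2) ℂ} {d₁ d₂ : ℕ}

theorem pos_of_transcendental_of_isHomogeneous {φ : MvPolynomial (Fin 2) ℂ} {d : ℕ}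
    (hφ : Transcendental ℂ φ) (h : φ.IsHomogeneous d) : 0 < d := by
  rw [Nat.pos_iff_ne_zero]
  rintro rfl
  rw [totalDegree_eq_zero_iff_eq_C.1 (Nat.le_zero.1 h.totalDegree_le)] at hφ
  exact hφ (isAlgebraic_algebraMap _)

theorem linearIndependent_pow_mul_pow (hφ : AlgebraicIndependent ℂ ![φ₁, φ₂]) :
    LinearIndependent ℂ fun p : ℕ × ℕ => φ₁ ^ p.1 * φ₂ ^ p.2 := by
  have h := linearIndependent_X_pow_mul_X_pow.map' (aeval ![φ₁, φ₂]).toLinearMap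
    (LinearMap.ker_eq_bot.2 hφ)
  have e : (aeval ![φ₁, φ₂]).toLinearMap ∘
      (fun p : ℕ × ℕ => (X 0 ^ p.1 * X 1 ^ p.2 : MvPolynomial (Fin 2) ℂ)) =
        fun p : ℕ × ℕ => φ₁ ^ p.1 * φ₂ ^ p.2 := by
    ext1 p
    simp
  rwa [← e]

theorem totalDegree_pow_mul_pow_le (h₁ : φ₁.IsHomogeneous d₁) (h₂ : φ₂.IsHomogeneous d₂)
    (j k : ℕ) : (φ₁ ^ j * φ₂ ^ k).totalDegree ≤ d₁ * j + d₂ * k :=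
  ((h₁.pow j).mul (h₂.pow k)).totalDegree_le

/-- Division with remainder in both coordinates. -/
def divIndex (m n : ℕ) (x : (Fin m × Fin n) × (ℕ × ℕ)) : ℕ × ℕ :=
  (m * x.2.1 + x.1.1, n * x.2.2 + x.1.2)

theorem divIndex_injective (m n : ℕ) : Function.Injective (divIndex m n) := by
  have key {m : ℕ} {r r' : Fin m} {q q' : ℕ} (h : m * q + r = m * q' + r') : r = r' ∧ q = q' := by
    have hr := congrArg (· % m) h
    have hq := congrArg (· / m) h
    have hm : 0 < m := r.pos
    simp only [Nat.mul_add_mod, Nat.mod_eq_of_lt r.2, Nat.mod_eq_of_lt r'.2] at hr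
    simp only [Nat.mul_add_div hm, Nat.div_eq_of_lt r.2, Nat.div_eq_of_lt r'.2] at hq
    exact ⟨Fin.ext hr, hq⟩
  rintro ⟨⟨r, s⟩, q, q'⟩ ⟨⟨r', s'⟩, p, p'⟩ h
  obtain ⟨h1, h2⟩ := Prod.mk.inj h
  obtain ⟨rfl, rfl⟩ := key h1
  obtain ⟨rfl, rfl⟩ := key h2
  rfl

theorem card_le_mul_of_algebraicIndependent (hφ : AlgebraicIndependent ℂ ![φ₁, φ₂])
    (hi₁ : φ₁ ∈ invariantSubalgebra G) (hi₂ : φ₂ ∈ invariantSubalgebra G)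
    (h₁ : φ₁.IsHomogeneous d₁) (h₂ : φ₂.IsHomogeneous d₂) : Nat.card G ≤ d₁ * d₂ := by
  have hd₁ := pos_of_transcendental_of_isHomogeneous (hφ.transcendental 0) h₁
  have hd₂ := pos_of_transcendental_of_isHomogeneous (hφ.transcendental 1) h₂
  have h := card_mul_card_le_sq (G := G) (T := d₁ * d₂) (C := 2 * (d₁ * d₂))
    ((linearIndependent_pow_mul_pow hφ).comp _ (divIndex_injective d₂ d₁))
    (fun i => mul_mem (pow_mem hi₁ _) (pow_mem hi₂ _)) (by
      rintro ⟨r, s⟩ ⟨q, q'⟩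
      refine (totalDegree_pow_mul_pow_le h₁ h₂ _ _).trans ?_
      have hr : d₁ * r ≤ d₁ * d₂ := Nat.mul_le_mul_left _ r.2.le
      have hs : d₂ * s ≤ d₂ * d₁ := Nat.mul_le_mul_left _ s.2.le
      simp only [divIndex]
      nlinarith)
  rw [Fintype.card_prod, Fintype.card_fin, Fintype.card_fin] at h
  refine Nat.le_of_mul_le_mul_right (c := d₁ * d₂) ?_ (Nat.mul_pos hd₁ hd₂)
  linarith

/-- A further quadratically growing family of independent invariants makes the rank bound
strict. -/
theorem card_lt_mul_of_linearIndependent (hφ : AlgebraicIndependent ℂ ![φ₁, φ₂])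
    (hi₁ : φ₁ ∈ invariantSubalgebra G) (hi₂ : φ₂ ∈ invariantSubalgebra G)
    (h₁ : φ₁.IsHomogeneous d₁) (h₂ : φ₂.IsHomogeneous d₂) {f : MvPolynomial (Fin 2) ℂ}
    (hf : f ∈ invariantSubalgebra G) {σ : ℕ × ℕ → ℕ × (ℕ × ℕ)}
    (hσ : ∀ p, (σ p).1 ≤ p.1 + 1 ∧ (σ p).2.1 ≤ p.1 + p.2 ∧ (σ p).2.2 ≤ p.1 + p.2)
    (hli : LinearIndependent ℂ fun i => f ^ (sumIndex σ i).1 *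
      (φ₁ ^ (sumIndex σ i).2.1 * φ₂ ^ (sumIndex σ i).2.2)) : Nat.card G < d₁ * d₂ := by
  have hd₁ := pos_of_transcendental_of_isHomogeneous (hφ.transcendental 0) h₁
  have hd₂ := pos_of_transcendental_of_isHomogeneous (hφ.transcendental 1) h₂
  obtain ⟨e, he⟩ : ∃ e, e = f.totalDegree + d₁ + d₂ := ⟨_, rfl⟩
  obtain ⟨D, hD⟩ : ∃ D, D = d₁ * d₂ := ⟨_, rfl⟩
  have hD0 : 0 < D := hD ▸ Nat.mul_pos hd₁ hd₂
  let κ : ((Fin (d₂ * e) × Fin (d₁ * e)) ⊕ Unit) × (ℕ × ℕ) → (ℕ × ℕ) ⊕ (ℕ × ℕ)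
    | (Sum.inl r, p) => Sum.inl (divIndex _ _ (r, p))
    | (Sum.inr _, p) => Sum.inr (D * p.1, D * p.2)
  have hκ : Function.Injective κ := by
    rintro ⟨r | r, p⟩ ⟨s | s, q⟩ h
    · have := divIndex_injective _ _ (Sum.inl.inj h)
      simp_all
    · simp [κ] at h
    · simp [κ] at h
    · have := Sum.inr.inj h
      simp only [Prod.mk.injEq, Nat.mul_right_inj hD0.ne'] at this
      simp [Prod.ext_iff, this]
  have h := card_mul_card_le_sq (G := G) (T := D * e) (C := 2 * (D * e))
    (hli.comp _ hκ) (fun i => mul_mem (pow_mem hf _) (mul_mem (pow_mem hi₁ _) (pow_mem hi₂ _))) (by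
      rintro (⟨r, s⟩ | u) ⟨q, q'⟩
      · simp only [Function.comp_apply, κ, sumIndex, Sum.elim_inl, divIndex, pow_zero, one_mul]
        refine (totalDegree_pow_mul_pow_le h₁ h₂ _ _).trans ?_
        have hr : d₁ * r ≤ d₁ * (d₂ * e) := Nat.mul_le_mul_left _ r.2.le
        have hs : d₂ * s ≤ d₂ * (d₁ * e) := Nat.mul_le_mul_left _ s.2.le
        rw [hD]
        linarith
      · simp only [Function.comp_apply, κ, sumIndex, Sum.elim_inr]
        obtain ⟨hk, hj₁, hj₂⟩ := hσ (D * q, D * q')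
        refine (totalDegree_mul _ _).trans ((add_le_add (totalDegree_pow _ _)
          (totalDegree_pow_mul_pow_le h₁ h₂ _ _)).trans ?_)
        calc _ ≤ (D * q + 1) * f.totalDegree + (d₁ * (D * q + D * q') + d₂ * (D * q + D * q')) := by
              gcongr
          _ ≤ (D * (q + q') + D * 2) * (f.totalDegree + d₁ + d₂) := by
              nlinarith [Nat.zero_le (D * q' * f.totalDegree), Nat.zero_le (D * d₁),
                Nat.zero_le (D * d₂), Nat.mul_le_mul_right f.totalDegree hD0]
          _ = D * e * (q + q') + 2 * (D * e) := by rw [he]; ring)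
  rw [Fintype.card_sum, Fintype.card_prod, Fintype.card_fin, Fintype.card_fin,
    Fintype.card_unit] at h
  have hG : 0 < Nat.card G := Nat.card_pos
  rw [← hD]
  by_contra! hle
  have := Nat.mul_le_mul_right (D * e ^ 2) hle
  have h' : Nat.card G * (d₂ * e * (d₁ * e) + 1) = Nat.card G * (D * e ^ 2) + Nat.card G := by
    rw [hD]; ring
  nlinarith

theorem mem_adjoin_of_card_eq (hφ : AlgebraicIndependent ℂ ![φ₁, φ₂])
    (hi₁ : φ₁ ∈ invariantSubalgebra G) (hi₂ : φ₂ ∈ invariantSubalgebra G)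
    (h₁ : φ₁.IsHomogeneous d₁) (h₂ : φ₂.IsHomogeneous d₂) (hcard : Nat.card G = d₁ * d₂)
    {f : MvPolynomial (Fin 2) ℂ} (hf : f ∈ invariantSubalgebra G) :
    f ∈ Algebra.adjoin ℂ {φ₁, φ₂} := by
  rw [adjoin_pair_eq_range_aeval]
  by_cases hfrac : ∀ a b : MvPolynomial (Fin 2) ℂ,
      aeval ![φ₁, φ₂] b * f = aeval ![φ₁, φ₂] a → b = 0
  · exact absurd hcard (card_lt_mul_of_linearIndependent hφ hi₁ hi₂ h₁ h₂ hf
      (fun p => ⟨by simp, by simp, by simp⟩) (linearIndependent_of_not_fraction hφ hfrac)).ne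
  push Not at hfrac
  obtain ⟨a, b, hba, hb0⟩ := hfrac
  obtain ⟨b', a', c, hrel, rfl, rfl⟩ := UniqueFactorizationMonoid.exists_reduced_factors b hb0 a
  have hba' : aeval ![φ₁, φ₂] b' * f = aeval ![φ₁, φ₂] a' := by
    refine mul_left_cancel₀ (a := aeval ![φ₁, φ₂] c) ?_ ?_
    · exact fun h => left_ne_zero_of_mul hb0 (hφ (h.trans (map_zero _).symm))
    · rwa [← mul_assoc, ← map_mul, ← map_mul]
  obtain hvars | ⟨s, hs⟩ := b'.vars.eq_empty_or_nonempty
  · rw [vars_eq_empty_iff_eq_C] at hvars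
    have hr : coeff 0 b' ≠ 0 := fun h => right_ne_zero_of_mul hb0 (by rw [hvars, h, map_zero])
    refine ⟨C (coeff 0 b')⁻¹ * a', ?_⟩
    have : aeval ![φ₁, φ₂] (C (coeff 0 b')⁻¹ * a') =
      aeval ![φ₁, φ₂] (C (coeff 0 b')⁻¹ * b') * f := by rw [map_mul, map_mul, mul_assoc, hba']
    refine this.trans ?_
    rw [hvars, coeff_C, if_pos rfl, ← C_mul, inv_mul_cancel₀ hr, map_one, map_one, one_mul]
  · exfalso
    obtain rfl | rfl : s = 0 ∨ s = 1 := by omega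
    · exact absurd hcard (card_lt_mul_of_linearIndependent hφ hi₁ hi₂ h₁ h₂ hf (by simp)
        (linearIndependent_of_fraction hφ hrel hba' hs (Prod.mk_right_injective 0) fun j => by
          simpa using pow_mem (X_mem_supported.2 (by simp)) j)).ne
    · exact absurd hcard (card_lt_mul_of_linearIndependent hφ hi₁ hi₂ h₁ h₂ hf (by simp)
        (linearIndependent_of_fraction hφ hrel hba' hs (Prod.mk_left_injective 0) fun j => by
          simpa using pow_mem (X_mem_supported.2 (by simp)) j)).ne

end Rank

theorem card_le_mul_card_of_forall_mem_span {K M ι : Type*} [Field K] [AddCommGroup M] [Module K M]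
    [Fintype ι] {n : ℕ} {v : ι → Fin n → M} (hv : LinearIndependent K v) {W : Finset M}
    (hW : ∀ i j, v i j ∈ Submodule.span K (W : Set M)) : Fintype.card ι ≤ n * W.card := by
  let v' : ι → Fin n → Submodule.span K (W : Set M) := fun i j => ⟨v i j, hW i j⟩
  have hv' : LinearIndependent K v' :=
    LinearIndependent.of_comp ((Submodule.span K (W : Set M)).subtype.compLeft (Fin n)) hv
  have h := hv'.fintype_card_le_finrank
  rw [Module.finrank_pi_fintype, Finset.sum_const, Finset.card_univ, Fintype.card_fin,
    smul_eq_mul] at h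
  exact h.trans (Nat.mul_le_mul_left _ (finrank_span_finset_le_card W))

section Generators

variable {φ₁ φ₂ : MvPolynomial (Fin 2) ℂ} {d₁ d₂ : ℕ}

/-- Products of powers of two homogeneous polynomials of degrees `d₁`, `d₂`, which include all
those of degree at most `d₁ * d₂ * M`. -/
noncomputable def powersUpTo (φ₁ φ₂ : MvPolynomial (Fin 2) ℂ) (d₁ d₂ M : ℕ) :
    Finset (MvPolynomial (Fin 2) ℂ) :=
  (Finset.univ ×ˢ triangle M).image fun x : (Fin d₂ × Fin d₁) × (ℕ × ℕ) =>
    φ₁ ^ (divIndex d₂ d₁ x).1 * φ₂ ^ (divIndex d₂ d₁ x).2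

theorem card_powersUpTo_le (M : ℕ) :
    (powersUpTo φ₁ φ₂ d₁ d₂ M).card ≤ d₁ * d₂ * (triangle M).card := by
  refine Finset.card_image_le.trans ?_
  rw [Finset.card_product, Finset.card_univ, Fintype.card_prod, Fintype.card_fin,
    Fintype.card_fin, mul_comm d₂]

theorem mem_powersUpTo (hd₁ : 0 < d₁) (hd₂ : 0 < d₂) {M j k : ℕ}
    (h : d₁ * j + d₂ * k ≤ d₁ * d₂ * M) : φ₁ ^ j * φ₂ ^ k ∈ powersUpTo φ₁ φ₂ d₁ d₂ M := by
  refine Finset.mem_image.2 ⟨((⟨j % d₂, Nat.mod_lt _ hd₂⟩, ⟨k % d₁, Nat.mod_lt _ hd₁⟩),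
    (j / d₂, k / d₁)), Finset.mem_product.2 ⟨Finset.mem_univ _, mem_triangle.2 ?_⟩, ?_⟩
  · refine le_of_mul_le_mul_left (a := d₁ * d₂) (le_trans ?_ h) (Nat.mul_pos hd₁ hd₂)
    have hj := Nat.mul_le_mul_left d₁ (Nat.mul_div_le j d₂)
    have hk := Nat.mul_le_mul_left d₂ (Nat.mul_div_le k d₁)
    linarith
  · simp only [divIndex, Nat.div_add_mod]

theorem mem_span_powersUpTo (hd₁ : 0 < d₁) (hd₂ : 0 < d₂)
    (h₁ : φ₁.IsHomogeneous d₁) (h₂ : φ₂.IsHomogeneous d₂) {M : ℕ} {p : MvPolynomial (Fin 2) ℂ}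
    (hp : p ∈ Algebra.adjoin ℂ {φ₁, φ₂}) (hdeg : p.totalDegree ≤ d₁ * d₂ * M) :
    p ∈ Submodule.span ℂ (powersUpTo φ₁ φ₂ d₁ d₂ M : Set (MvPolynomial (Fin 2) ℂ)) := by
  let trunc : MvPolynomial (Fin 2) ℂ →ₗ[ℂ] MvPolynomial (Fin 2) ℂ :=
    ∑ i ∈ Finset.range (d₁ * d₂ * M + 1), homogeneousComponent i
  have htrunc : trunc p = p := by
    conv_rhs => rw [← sum_homogeneousComponent p]
    rw [LinearMap.sum_apply]
    refine (Finset.sum_subset (Finset.range_subset_range.2 (by omega)) fun i _ hi => ?_).symm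
    exact homogeneousComponent_eq_zero _ _ (by simpa using hi)
  rw [adjoin_pair_eq_range_aeval] at hp
  obtain ⟨u, rfl⟩ := hp
  rw [← htrunc]
  clear htrunc hdeg
  rw [u.as_sum, map_sum, map_sum]
  refine Submodule.sum_mem _ fun m _ => ?_
  rw [← mul_one (coeff m u), ← smul_eq_mul, ← smul_monomial, ← X_pow_mul_X_pow_eq_monomial]
  have he : (aeval ![φ₁, φ₂] : MvPolynomial (Fin 2) ℂ →ₐ[ℂ] MvPolynomial (Fin 2) ℂ).toRingHom
      (coeff m u • (X 0 ^ m 0 * X 1 ^ m 1)) = coeff m u • (φ₁ ^ m 0 * φ₂ ^ m 1) := by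
    simp
  rw [he, map_smul]
  refine Submodule.smul_mem _ _ ?_
  rw [LinearMap.sum_apply]
  simp only [homogeneousComponent_of_mem ((h₁.pow (m 0)).mul (h₂.pow (m 1))),
    Finset.sum_ite_eq', Finset.mem_range]
  split_ifs with h
  · exact Submodule.subset_span (mem_powersUpTo hd₁ hd₂ (Nat.lt_succ_iff.1 h))
  · exact zero_mem _

theorem mul_le_card_of_forall_mem_adjoin {G : Subgroup (GL (Fin 2) ℂ)} [Finite G]
    (hd₁ : 0 < d₁) (hd₂ : 0 < d₂) (h₁ : φ₁.IsHomogeneous d₁) (h₂ : φ₂.IsHomogeneous d₂)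
    (hgen : ∀ p ∈ invariantSubalgebra G, p ∈ Algebra.adjoin ℂ {φ₁, φ₂}) :
    d₁ * d₂ ≤ Nat.card G := by
  have := Fintype.ofFinite G
  obtain ⟨t, ht1, ht⟩ := exists_injective_linearSubst G
  let L : MvPolynomial (Fin 2) ℂ →ₗ[ℂ] Fin (Nat.card G) → MvPolynomial (Fin 2) ℂ :=
    LinearMap.pi fun i => orbitTrace G ∘ₗ LinearMap.mulRight ℂ (t ^ (i : ℕ))
  have hL : LinearMap.ker L = ⊥ := LinearMap.ker_eq_bot'.2 fun s hs =>
    eq_zero_of_forall_orbitTrace_mul_pow_eq_zero ht fun i => congrFun hs i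
  refine le_of_forall_quadratic_le (c := Nat.card G) fun M => ?_
  have h := card_le_mul_card_of_forall_mem_span
    (W := powersUpTo φ₁ φ₂ d₁ d₂ (M + Nat.card G))
    ((linearIndependent_X_pow_mul_X_pow.map' L hL).comp
      (Subtype.val : triangle (d₁ * d₂ * M) → ℕ × ℕ) Subtype.val_injective) (by
      rintro ⟨p, hp⟩ i
      refine mem_span_powersUpTo hd₁ hd₂ h₁ h₂ (hgen _ (orbitTrace_mem G _)) ?_
      refine (totalDegree_orbitTrace_le G _).trans ((totalDegree_mul _ _).trans ?_)
      rw [mem_triangle] at hp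
      have hX := totalDegree_pow_mul_pow_le (isHomogeneous_X ℂ (0 : Fin 2))
        (isHomogeneous_X ℂ (1 : Fin 2)) p.1 p.2
      have htp : (t ^ (i : ℕ)).totalDegree ≤ Nat.card G :=
        (totalDegree_pow _ _).trans ((Nat.mul_le_mul i.2.le ht1).trans (mul_one _).le)
      have hD : 1 * Nat.card G ≤ d₁ * d₂ * Nat.card G :=
        Nat.mul_le_mul_right _ (Nat.mul_pos hd₁ hd₂)
      rw [mul_add]
      dsimp only
      omega)
  rw [Fintype.card_coe] at h
  have h' := h.trans (Nat.mul_le_mul_left _ (card_powersUpTo_le _))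
  rw [← two_mul_card_triangle, ← two_mul_card_triangle]
  linarith

end Generators

/-- Let `G ⊂ GL(2,ℂ)` be a finite complex reflection group (a
finite subgroup generated by its pseudo-reflections, elements `≠ 1` fixing a
hyperplane pointwise). Then there exist two algebraically independent
homogeneous invariants `φ₁, φ₂` with `|G| = deg φ₁ · deg φ₂` if and only if
there exist two algebraically independent homogeneous invariants `φ₁, φ₂` which
together with `1` generate `ℂ[x,y]^G` as a `ℂ`-algebra. -/
theorem stmt_12 (G : Subgroup (GL (Fin 2) ℂ)) [Finite G]
    (hrefl : Subgroup.closure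
      {g : GL (Fin 2) ℂ | g ∈ G ∧ g ≠ 1 ∧
        ∃ v : Fin 2 → ℂ, v ≠ 0 ∧ Matrix.mulVec (g : Matrix (Fin 2) (Fin 2) ℂ) v = v}
      = G) :
    (∃ (φ₁ φ₂ : MvPolynomial (Fin 2) ℂ) (d₁ d₂ : ℕ),
        IsInvariantPoly G φ₁ ∧ IsInvariantPoly G φ₂ ∧
        φ₁.IsHomogeneous d₁ ∧ φ₂.IsHomogeneous d₂ ∧
        AlgebraicIndependent ℂ ![φ₁, φ₂] ∧
        Nat.card G = d₁ * d₂) ↔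
    (∃ (φ₁ φ₂ : MvPolynomial (Fin 2) ℂ) (d₁ d₂ : ℕ),
        IsInvariantPoly G φ₁ ∧ IsInvariantPoly G φ₂ ∧
        φ₁.IsHomogeneous d₁ ∧ φ₂.IsHomogeneous d₂ ∧
        AlgebraicIndependent ℂ ![φ₁, φ₂] ∧
        ∀ p : MvPolynomial (Fin 2) ℂ, IsInvariantPoly G p →
          p ∈ Algebra.adjoin ℂ {φ₁, φ₂}) := by
  constructor
  · rintro ⟨φ₁, φ₂, d₁, d₂, hi₁, hi₂, h₁, h₂, hφ, hcard⟩
    exact ⟨φ₁, φ₂, d₁, d₂, hi₁, hi₂, h₁, h₂, hφ,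
      fun p hp => mem_adjoin_of_card_eq hφ hi₁ hi₂ h₁ h₂ hcard hp⟩
  · rintro ⟨φ₁, φ₂, d₁, d₂, hi₁, hi₂, h₁, h₂, hφ, hgen⟩
    refine ⟨φ₁, φ₂, d₁, d₂, hi₁, hi₂, h₁, h₂, hφ,
      (card_le_mul_of_algebraicIndependent hφ hi₁ hi₂ h₁ h₂).antisymm ?_⟩
    exact mul_le_card_of_forall_mem_adjoin
      (pos_of_transcendental_of_isHomogeneous (hφ.transcendental 0) h₁)
      (pos_of_transcendental_of_isHomogeneous (hφ.transcendental 1) h₂) h₁ h₂ hgen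
end

section
/- For n ≥ 2 and d ≥ 3: if ∏_{i=1}^{n−1}(aᵢ−1) ≠ ∏_{i=1}^{n−1}(bᵢ−1) (with all aᵢ, bᵢ ≥ 2), then the proper maps f_{d,a}(x) = (x₁,…,x_{n−1}, xₙ^d − d(∑ xᵢ^{aᵢ})xₙ) and f_{d,b} are not equivalent, i.e., there are no polynomial automorphisms Φ₁, Φ₂ of ℂⁿ with f_{d,b} = Φ₂ ∘ f_{d,a} ∘ Φ₁. Consequently, for each d ≥ 3 there are infinitely many equivalence classes of proper polynomial self-maps of ℂⁿ of topological degree d. -/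
open MvPolynomial

variable (N : ℕ)

/-- `f : ℂᴺ → ℂᴺ` is a polynomial map. -/
def IsPolyMapN (f : (Fin N → ℂ) → (Fin N → ℂ)) : Prop :=
  ∃ P : Fin N → MvPolynomial (Fin N) ℂ, ∀ x i, f x i = eval x (P i)

/-- A polynomial automorphism of `ℂᴺ`. -/
def IsPolyAutN (Φ : (Fin N → ℂ) ≃ (Fin N → ℂ)) : Prop :=
  IsPolyMapN N Φ ∧ IsPolyMapN N Φ.symm

/-- Equivalence of maps: `f₂ = Φ₂ ∘ f₁ ∘ Φ₁` with `Φ₁, Φ₂ ∈ Aut(ℂᴺ)`. -/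
def EquivMaps (f₁ f₂ : (Fin N → ℂ) → (Fin N → ℂ)) : Prop :=
  ∃ Φ₁ Φ₂ : (Fin N → ℂ) ≃ (Fin N → ℂ), IsPolyAutN N Φ₁ ∧ IsPolyAutN N Φ₂ ∧
    ∀ x, f₂ x = Φ₂ (f₁ (Φ₁ x))

/-- Properness: preimages of compact sets are compact. -/
def IsProperN (f : (Fin N → ℂ) → (Fin N → ℂ)) : Prop :=
  ∀ K : Set (Fin N → ℂ), IsCompact K → IsCompact (f ⁻¹' K)

/-- Topological degree `d`: every point off some algebraic hypersurface has
exactly `d` preimages. -/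
def HasTopDegreeN (f : (Fin N → ℂ) → (Fin N → ℂ)) (d : ℕ) : Prop :=
  ∃ P : MvPolynomial (Fin N) ℂ, P ≠ 0 ∧
    ∀ y : Fin N → ℂ, eval y P ≠ 0 → (f ⁻¹' {y}).ncard = d

/-- The map `f_{d,a}(x₁,…,xₙ) = (x₁,…,x_{n−1}, xₙ^d − d(∑ xᵢ^{aᵢ})xₙ)`
(with `n = m + 1`). -/
noncomputable def fda (m d : ℕ) (a : Fin m → ℕ) (x : Fin (m + 1) → ℂ) :
    Fin (m + 1) → ℂ := fun i =>
  if i = Fin.last m then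
    x (Fin.last m) ^ d
      - (d : ℂ) * (∑ j : Fin m, x (Fin.castSucc j) ^ a j) * x (Fin.last m)
  else x i

section Jacobian

variable {σ K : Type*}

theorem MvPolynomial.eval_bind₁ [CommRing K] (G : σ → MvPolynomial σ K)
    (p : MvPolynomial σ K) (x : σ → K) :
    eval x (bind₁ G p) = eval (fun i => eval x (G i)) p := by
  simpa [aeval_eq_eval] using aeval_bind₁ x G p

theorem MvPolynomial.pderiv_bind₁ [CommRing K] [Fintype σ] (G : σ → MvPolynomial σ K)
    (p : MvPolynomial σ K) (i : σ) :
    pderiv i (bind₁ G p) = ∑ j, bind₁ G (pderiv j p) * pderiv i (G j) := by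
  classical
  induction p using MvPolynomial.induction_on with
  | C a => simp
  | add p q hp hq => simp [hp, hq, add_mul, Finset.sum_add_distrib]
  | mul_X p k hp =>
    simp only [map_mul, bind₁_X_right, pderiv_mul, hp, map_add, add_mul, Finset.sum_add_distrib,
      pderiv_X, Finset.sum_mul]
    congr 1
    · exact Finset.sum_congr rfl fun j _ => by ring
    · rw [Finset.sum_eq_single k]
      · simp
      · intro j _ hj
        simp [Ne.symm hj]
      · simp

/-- The Jacobian matrix of a polynomial self-map of affine space. -/
noncomputable def jacobianMatrix [CommRing K] (F : σ → MvPolynomial σ K) :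
    Matrix σ σ (MvPolynomial σ K) :=
  Matrix.of fun i j => pderiv j (F i)

theorem jacobianMatrix_bind₁ [CommRing K] [Fintype σ] (F G : σ → MvPolynomial σ K) :
    jacobianMatrix (fun i => bind₁ G (F i)) =
      (jacobianMatrix F).map (bind₁ G) * jacobianMatrix G := by
  ext1 i j
  simp [jacobianMatrix, Matrix.mul_apply, pderiv_bind₁]

theorem det_jacobianMatrix_bind₁ [CommRing K] [Fintype σ] [DecidableEq σ]
    (F G : σ → MvPolynomial σ K) :
    (jacobianMatrix (fun i => bind₁ G (F i))).det =
      bind₁ G (jacobianMatrix F).det * (jacobianMatrix G).det := by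
  rw [jacobianMatrix_bind₁, Matrix.det_mul, AlgHom.map_det]
  rfl

theorem isUnit_det_jacobianMatrix [CommRing K] [Fintype σ] [DecidableEq σ]
    {P Q : σ → MvPolynomial σ K} (h : ∀ i, bind₁ Q (P i) = X i) :
    IsUnit (jacobianMatrix Q).det := by
  have h₁ : jacobianMatrix (X : σ → MvPolynomial σ K) = 1 := by
    ext1 i j
    rw [Matrix.one_apply]
    simp [jacobianMatrix, pderiv_X, Pi.single_apply]
  have h₂ := det_jacobianMatrix_bind₁ P Q
  simp only [h] at h₂
  change (jacobianMatrix X).det = _ at h₂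
  rw [h₁, Matrix.det_one] at h₂
  exact IsUnit.of_mul_eq_one_right _ h₂.symm

/-- The ideal generated by the partial derivatives of a polynomial. -/
noncomputable def jacobianIdeal [CommRing K] (p : MvPolynomial σ K) : Ideal (MvPolynomial σ K) :=
  Ideal.span (Set.range fun i => pderiv i p)

theorem Ideal.span_range_mul_eq_of_isUnit {R ι : Type*} [CommRing R] (u f : ι → R)
    (hu : ∀ i, IsUnit (u i)) :
    Ideal.span (Set.range fun i => u i * f i) = Ideal.span (Set.range f) := by
  refine le_antisymm (Ideal.span_le.mpr ?_) (Ideal.span_le.mpr ?_)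
  · rintro _ ⟨i, rfl⟩
    exact Ideal.mul_mem_left _ _ (Ideal.subset_span ⟨i, rfl⟩)
  · rintro _ ⟨i, rfl⟩
    exact (Ideal.unit_mul_mem_iff_mem _ (hu i)).mp (Ideal.subset_span ⟨i, rfl⟩)

theorem jacobianIdeal_mul_of_isUnit [Field K] {u : MvPolynomial σ K} (hu : IsUnit u)
    (p : MvPolynomial σ K) : jacobianIdeal (u * p) = jacobianIdeal p := by
  obtain ⟨r, -, rfl⟩ := isUnit_iff_eq_C_of_isReduced.mp hu
  simp only [jacobianIdeal, pderiv_C_mul]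
  exact Ideal.span_range_mul_eq_of_isUnit _ _ fun _ => hu

theorem jacobianIdeal_bind₁_le [CommRing K] [Fintype σ] (G : σ → MvPolynomial σ K)
    (p : MvPolynomial σ K) :
    jacobianIdeal (bind₁ G p) ≤ (jacobianIdeal p).map (bind₁ G) := by
  rw [jacobianIdeal, Ideal.span_le]
  rintro _ ⟨i, rfl⟩
  simp only [pderiv_bind₁]
  refine Ideal.sum_mem _ fun j _ => Ideal.mul_mem_right _ _ (Ideal.mem_map_of_mem _ ?_)
  exact Ideal.subset_span ⟨j, rfl⟩

/-- The algebra automorphism given by a pair of mutually inverse polynomial substitutions. -/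
noncomputable def bind₁Equiv [CommRing K] (P Q : σ → MvPolynomial σ K)
    (h₁ : ∀ i, bind₁ Q (P i) = X i) (h₂ : ∀ i, bind₁ P (Q i) = X i) :
    MvPolynomial σ K ≃ₐ[K] MvPolynomial σ K :=
  AlgEquiv.ofAlgHom (bind₁ P) (bind₁ Q) (by ext i; simp [h₂]) (by ext i; simp [h₁])

theorem jacobianIdeal_bind₁ [CommRing K] [Fintype σ] {P Q : σ → MvPolynomial σ K}
    (h₁ : ∀ i, bind₁ Q (P i) = X i) (h₂ : ∀ i, bind₁ P (Q i) = X i) (p : MvPolynomial σ K) :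
    jacobianIdeal (bind₁ P p) = (jacobianIdeal p).map (bind₁ P) := by
  have hQP : ∀ q, bind₁ Q (bind₁ P q) = q := fun q => (bind₁Equiv P Q h₁ h₂).symm_apply_apply q
  have hPQ : ∀ q, bind₁ P (bind₁ Q q) = q := fun q => (bind₁Equiv P Q h₁ h₂).apply_symm_apply q
  refine le_antisymm (jacobianIdeal_bind₁_le P p) ?_
  rw [Ideal.map_le_iff_le_comap]
  have h := jacobianIdeal_bind₁_le Q (bind₁ P p)
  rw [hQP] at h
  refine h.trans (Ideal.map_le_iff_le_comap.mpr fun q hq => ?_)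
  simpa [Ideal.mem_comap, hPQ] using hq

/-- The total Milnor number of a polynomial: the dimension of its global Milnor algebra. -/
noncomputable def milnorNumber [Field K] (p : MvPolynomial σ K) : ℕ :=
  Module.finrank K (MvPolynomial σ K ⧸ jacobianIdeal p)

theorem milnorNumber_mul_of_isUnit [Field K] {u : MvPolynomial σ K} (hu : IsUnit u)
    (p : MvPolynomial σ K) : milnorNumber (u * p) = milnorNumber p := by
  unfold milnorNumber
  rw [jacobianIdeal_mul_of_isUnit hu]

theorem milnorNumber_bind₁ [Field K] [Fintype σ] {P Q : σ → MvPolynomial σ K}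
    (h₁ : ∀ i, bind₁ Q (P i) = X i) (h₂ : ∀ i, bind₁ P (Q i) = X i) (p : MvPolynomial σ K) :
    milnorNumber (bind₁ P p) = milnorNumber p :=
  (Ideal.quotientEquivAlg (jacobianIdeal p) (jacobianIdeal (bind₁ P p)) (bind₁Equiv P Q h₁ h₂)
    (jacobianIdeal_bind₁ h₁ h₂ p)).toLinearEquiv.finrank_eq.symm

end Jacobian

section MonomialQuotient

variable {σ K : Type*}

/-- The dimension of the quotient by the ideal generated by powers of the variables. -/
theorem finrank_quotient_span_X_pow [Field K] [Fintype σ] (e : σ → ℕ) :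
    Module.finrank K (MvPolynomial σ K ⧸
      Ideal.span (Set.range fun i => (X i : MvPolynomial σ K) ^ e i)) = ∏ i, e i := by
  classical
  let v : (∀ i, Fin (e i)) → σ →₀ ℕ := fun s => Finsupp.equivFunOnFinite.symm fun i => (s i : ℕ)
  have hv : Function.Injective v := fun s t h => by
    ext i
    exact DFunLike.congr_fun h i
  let L : MvPolynomial σ K →ₗ[K] ((∀ i, Fin (e i)) → K) :=
    LinearMap.pi fun s => lcoeff K (v s)
  have hL : ∀ p s, L p s = coeff (v s) p := fun _ _ => rfl
  have hker : LinearMap.ker L =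
      (Ideal.span (Set.range fun i => (X i : MvPolynomial σ K) ^ e i)).restrictScalars K := by
    have hset : (Set.range fun i => (X i : MvPolynomial σ K) ^ e i) =
        (fun s => monomial s (1 : K)) '' Set.range fun i => Finsupp.single i (e i) := by
      rw [← Set.range_comp]
      congr 1
      ext1 i
      simp [X_pow_eq_monomial]
    ext p
    rw [hset, Submodule.restrictScalars_mem, mem_ideal_span_monomial_image, LinearMap.mem_ker]
    constructor
    · intro h t ht
      by_contra! hlt
      have hlt' : ∀ i, t i < e i := fun i => by
        by_contra! hi
        exact hlt _ ⟨i, rfl⟩ (by simpa using hi)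
      have h0 := hL p fun i => ⟨t i, hlt' i⟩
      have hvt : v (fun i => ⟨t i, hlt' i⟩) = t := by ext i; rfl
      rw [h, hvt] at h0
      exact mem_support_iff.mp ht h0.symm
    · intro h
      ext s
      rw [hL]
      by_contra hs
      obtain ⟨_, ⟨i, rfl⟩, hi⟩ := h _ (mem_support_iff.mpr hs)
      rw [Finsupp.single_le_iff] at hi
      exact absurd hi (not_le.mpr (s i).2)
  have hsurj : Function.Surjective L := fun c => by
    refine ⟨∑ s, monomial (v s) (c s), ?_⟩
    ext s
    simp [hL, coeff_sum, coeff_monomial, hv.eq_iff]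
  let E := (Submodule.Quotient.restrictScalarsEquiv K
    (Ideal.span (Set.range fun i => (X i : MvPolynomial σ K) ^ e i))).symm.trans
      ((Submodule.quotEquivOfEq _ _ hker.symm).trans (L.quotKerEquivOfSurjective hsurj))
  rw [E.finrank_eq]
  simp

end MonomialQuotient

section Equivalence

theorem IsPolyAutN.exists_bind₁ {n : ℕ} {Φ : (Fin n → ℂ) ≃ (Fin n → ℂ)} (h : IsPolyAutN n Φ) :
    ∃ P Q : Fin n → MvPolynomial (Fin n) ℂ, (∀ x i, Φ x i = eval x (P i)) ∧
      (∀ i, bind₁ Q (P i) = X i) ∧ ∀ i, bind₁ P (Q i) = X i := by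
  obtain ⟨⟨P, hP⟩, Q, hQ⟩ := h
  refine ⟨P, Q, hP, fun i => funext fun x => ?_, fun i => funext fun x => ?_⟩
  · rw [eval_bind₁, eval_X]
    simp only [← hQ]
    change eval (Φ.symm x) (P i) = x i
    rw [← hP, Equiv.apply_symm_apply]
  · rw [eval_bind₁, eval_X]
    simp only [← hP]
    change eval (Φ x) (Q i) = x i
    rw [← hQ, Equiv.symm_apply_apply]

/-- The total Milnor number of the Jacobian determinant is an invariant of equivalence. -/
theorem EquivMaps.milnorNumber_det_jacobianMatrix_eq {n : ℕ} {f g : (Fin n → ℂ) → (Fin n → ℂ)}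
    {F G : Fin n → MvPolynomial (Fin n) ℂ} (hF : ∀ x i, f x i = eval x (F i))
    (hG : ∀ x i, g x i = eval x (G i)) (h : EquivMaps n f g) :
    milnorNumber (jacobianMatrix F).det = milnorNumber (jacobianMatrix G).det := by
  obtain ⟨Φ₁, Φ₂, h₁, h₂, hfg⟩ := h
  obtain ⟨P, Q, hP, hQP, hPQ⟩ := h₁.exists_bind₁
  obtain ⟨R, S, hR, hSR, hRS⟩ := h₂.exists_bind₁
  have hcomp : G = fun i => bind₁ P (bind₁ F (R i)) := by
    ext1 i
    refine funext fun x => ?_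
    rw [← hG, hfg, hR, eval_bind₁, eval_bind₁]
    simp only [← hP, ← hF]
  have hdet : (jacobianMatrix G).det =
      (bind₁ P (bind₁ F (jacobianMatrix R).det) * (jacobianMatrix P).det) *
        bind₁ P (jacobianMatrix F).det := by
    rw [hcomp, det_jacobianMatrix_bind₁, det_jacobianMatrix_bind₁, map_mul]
    ring
  have hu : IsUnit (bind₁ P (bind₁ F (jacobianMatrix R).det) * (jacobianMatrix P).det) :=
    (((isUnit_det_jacobianMatrix hRS).map _).map _).mul (isUnit_det_jacobianMatrix hPQ)
  rw [hdet, milnorNumber_mul_of_isUnit hu, milnorNumber_bind₁ hQP hPQ]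

end Equivalence

section Family

variable {m d : ℕ} {a b : Fin m → ℕ}

/-- The polynomials defining `fda m d a`. -/
noncomputable def fdaPoly (m d : ℕ) (a : Fin m → ℕ) (i : Fin (m + 1)) :
    MvPolynomial (Fin (m + 1)) ℂ :=
  if i = Fin.last m then
    X (Fin.last m) ^ d - C (d : ℂ) * (∑ j : Fin m, X (Fin.castSucc j) ^ a j) * X (Fin.last m)
  else X i

theorem fda_apply_eq_eval (m d : ℕ) (a : Fin m → ℕ) (x : Fin (m + 1) → ℂ) (i : Fin (m + 1)) :
    fda m d a x i = eval x (fdaPoly m d a i) := by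
  unfold fda fdaPoly
  split_ifs <;> simp

theorem isPolyMapN_fda (m d : ℕ) (a : Fin m → ℕ) : IsPolyMapN (m + 1) (fda m d a) :=
  ⟨fdaPoly m d a, fda_apply_eq_eval m d a⟩

theorem det_jacobianMatrix_fdaPoly (m d : ℕ) (a : Fin m → ℕ) :
    (jacobianMatrix (fdaPoly m d a)).det =
      C (d : ℂ) * (X (Fin.last m) ^ (d - 1) - ∑ j : Fin m, X (Fin.castSucc j) ^ a j) := by
  rw [Matrix.det_of_isLowerTriangular, Fin.prod_univ_castSucc]
  · have h : ∀ j : Fin m, jacobianMatrix (fdaPoly m d a) j.castSucc j.castSucc = 1 := fun j => by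
      simp [jacobianMatrix, fdaPoly, Fin.castSucc_ne_last]
    simp only [h, Finset.prod_const_one, one_mul]
    simp [jacobianMatrix, fdaPoly, pderiv_X, Fin.castSucc_ne_last]
    ring
  · intro i j hij
    have hlt : i < j := hij
    have hi : i ≠ Fin.last m := (hlt.trans_le (Fin.le_last j)).ne
    simp [jacobianMatrix, fdaPoly, hi, pderiv_X, hlt.ne]

theorem milnorNumber_X_pow_sub_sum (hd : 3 ≤ d) (ha : ∀ i, 2 ≤ a i) :
    milnorNumber (X (Fin.last m) ^ (d - 1) - ∑ j : Fin m, X (Fin.castSucc j) ^ a j :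
      MvPolynomial (Fin (m + 1)) ℂ) = (∏ i, (a i - 1)) * (d - 2) := by
  let e : Fin (m + 1) → ℕ := Fin.snoc (α := fun _ => ℕ) (fun i => a i - 1) (d - 2)
  let c : Fin (m + 1) → ℂ := Fin.snoc (α := fun _ => ℂ) (fun i => -(a i : ℂ)) ((d - 1 : ℕ) : ℂ)
  have hc : ∀ i, c i ≠ 0 := fun i => by
    refine Fin.lastCases ?_ (fun j => ?_) i
    · simp only [c, Fin.snoc_last, Nat.cast_ne_zero]
      omega
    · have := ha j
      simp only [c, Fin.snoc_castSucc, neg_ne_zero, Nat.cast_ne_zero]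
      omega
  have h : ∀ i, pderiv i (X (Fin.last m) ^ (d - 1) - ∑ j : Fin m, X (Fin.castSucc j) ^ a j :
      MvPolynomial (Fin (m + 1)) ℂ) = C (c i) * X i ^ e i := fun i => by
    refine Fin.lastCases ?_ (fun j => ?_) i
    · simp [c, e, pderiv_X, Fin.castSucc_ne_last, Nat.sub_sub]
    · rw [map_sub, map_sum, Finset.sum_eq_single j]
      · simp [c, e, pderiv_X, Fin.castSucc_ne_last]
      · intro k _ hk
        simp [pderiv_X, hk]
      · simp
  have hprod : ∏ i, e i = (∏ i, (a i - 1)) * (d - 2) := by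
    simp [e, Fin.prod_univ_castSucc]
  have hJ : jacobianIdeal (X (Fin.last m) ^ (d - 1) - ∑ j : Fin m, X (Fin.castSucc j) ^ a j :
      MvPolynomial (Fin (m + 1)) ℂ) = Ideal.span (Set.range fun i => C (c i) * X i ^ e i) :=
    congrArg (fun f => Ideal.span (Set.range f)) (funext h)
  rw [milnorNumber, hJ, Ideal.span_range_mul_eq_of_isUnit _ _ fun i => (isUnit_iff_ne_zero.mpr (hc i)).map C,
    finrank_quotient_span_X_pow, hprod]

theorem not_equivMaps_fda (hd : 3 ≤ d) (ha : ∀ i, 2 ≤ a i) (hb : ∀ i, 2 ≤ b i)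
    (hne : ∏ i, (a i - 1) ≠ ∏ i, (b i - 1)) :
    ¬ EquivMaps (m + 1) (fda m d a) (fda m d b) := by
  intro h
  have hu : IsUnit (C (d : ℂ) : MvPolynomial (Fin (m + 1)) ℂ) :=
    (isUnit_iff_ne_zero.mpr (Nat.cast_ne_zero.mpr (by omega))).map C
  have heq := h.milnorNumber_det_jacobianMatrix_eq (fda_apply_eq_eval m d a)
    (fda_apply_eq_eval m d b)
  rw [det_jacobianMatrix_fdaPoly, det_jacobianMatrix_fdaPoly, milnorNumber_mul_of_isUnit hu,
    milnorNumber_mul_of_isUnit hu, milnorNumber_X_pow_sub_sum hd ha, milnorNumber_X_pow_sub_sum hd hb] at heq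
  exact hne (Nat.eq_of_mul_eq_mul_right (by omega) heq)

theorem isProperN_fda (hd : 2 ≤ d) (a : Fin m → ℕ) : IsProperN (m + 1) (fda m d a) := by
  intro K hK
  have hcont : Continuous (fda m d a) := continuous_pi fun i => by
    simp only [fda_apply_eq_eval]
    exact MvPolynomial.continuous_eval _
  obtain ⟨R, hR⟩ := hK.isBounded.exists_norm_le
  let S : ℝ := d * ∑ j, R ^ a j
  refine Metric.isCompact_of_isClosed_isBounded (hK.isClosed.preimage hcont)
    (isBounded_iff_forall_norm_le.mpr ⟨max (max 1 (R + S)) R, fun x hx => ?_⟩)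
  have hy : ∀ i, ‖fda m d a x i‖ ≤ R := fun i => (norm_le_pi_norm _ i).trans (hR _ hx)
  have hx' : ∀ j : Fin m, ‖x j.castSucc‖ ≤ R := fun j => by
    simpa [fda, Fin.castSucc_ne_last] using hy j.castSucc
  have hR0 : 0 ≤ R := (norm_nonneg _).trans (hR _ hx)
  refine (pi_norm_le_iff_of_nonneg (hR0.trans (le_max_right _ _))).mpr fun i => ?_
  refine Fin.lastCases ?_ (fun j => (hx' j).trans (le_max_right _ _)) i
  refine le_trans ?_ (le_max_left _ _)
  set t := x (Fin.last m)
  have hsum : ‖(d : ℂ) * ∑ j : Fin m, x j.castSucc ^ a j‖ ≤ S := by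
    rw [norm_mul, Complex.norm_natCast]
    refine mul_le_mul_of_nonneg_left ((norm_sum_le _ _).trans
      (Finset.sum_le_sum fun j _ => ?_)) d.cast_nonneg
    rw [norm_pow]
    exact pow_le_pow_left₀ (norm_nonneg _) (hx' j) _
  have hlast : t ^ d = fda m d a x (Fin.last m) +
      ((d : ℂ) * ∑ j : Fin m, x j.castSucc ^ a j) * t := by
    simp [fda, t]
  have hle : ‖t‖ ^ d ≤ R + S * ‖t‖ := by
    rw [← norm_pow, hlast]
    refine (norm_add_le _ _).trans (add_le_add (hy _) ?_)
    rw [norm_mul]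
    exact mul_le_mul_of_nonneg_right hsum (norm_nonneg _)
  by_contra! hlt
  obtain ⟨h1, h2⟩ := max_lt_iff.mp hlt
  have hsq : ‖t‖ ^ 2 ≤ ‖t‖ ^ d := pow_le_pow_right₀ h1.le hd
  nlinarith

/-- A trinomial `T ^ d - d s T - c` with nonvanishing discriminant has `d` distinct roots. -/
theorem ncard_setOf_pow_sub_mul_eq (hd : 2 ≤ d) {s c : ℂ}
    (h : (1 - d : ℂ) ^ (d - 1) * s ^ d ≠ c ^ (d - 1)) :
    {t : ℂ | t ^ d - d * s * t = c}.ncard = d := by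
  classical
  let p : Polynomial ℂ := .X ^ d - (.C (d * s) * .X + .C c)
  have hlin : (Polynomial.C (d * s) * Polynomial.X + Polynomial.C c : Polynomial ℂ).degree <
      (d : WithBot ℕ) :=
    Polynomial.degree_linear_lt.trans_le (by exact_mod_cast hd)
  have hdeg : p.natDegree = d := Polynomial.natDegree_eq_of_degree_eq_some
    (by rw [Polynomial.degree_sub_eq_left_of_degree_lt (by rwa [Polynomial.degree_X_pow]),
      Polynomial.degree_X_pow])
  have hp : p ≠ 0 := fun h0 => by
    rw [h0, Polynomial.natDegree_zero] at hdeg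
    omega
  have hder : p.derivative = .C (d : ℂ) * .X ^ (d - 1) - .C (d * s) := by
    rw [Polynomial.derivative_sub, Polynomial.derivative_add, Polynomial.derivative_C_mul_X,
      Polynomial.derivative_C, add_zero, Polynomial.derivative_X_pow]
  have hnodup : p.roots.Nodup := by
    refine (Polynomial.nodup_roots_iff_of_splits hp (IsAlgClosed.splits p)).mpr ?_
    refine (Polynomial.isCoprime_iff_aeval_ne_zero_of_isAlgClosed ℂ ℂ _ _).mpr fun t => ?_
    by_contra! hc
    obtain ⟨h1, h2⟩ := hc
    have hd0 : (d : ℂ) ≠ 0 := Nat.cast_ne_zero.mpr (by omega)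
    rw [hder] at h2
    simp only [p, map_sub, map_add, map_mul, map_pow, Polynomial.aeval_X, Polynomial.aeval_C,
      Algebra.algebraMap_self, RingHom.id_apply] at h1 h2
    have hs : t ^ (d - 1) = s := mul_left_cancel₀ hd0 (by linear_combination h2)
    have hpow : t ^ d = s * t := by rw [← hs, ← pow_succ, Nat.sub_add_cancel (by omega)]
    have hcc : c = (1 - d : ℂ) * (s * t) := by linear_combination hpow - h1
    apply h
    rw [hcc, mul_pow, mul_pow, hs, ← pow_succ, Nat.sub_add_cancel (by omega)]
  have hset : {t : ℂ | t ^ d - d * s * t = c} = (p.roots.toFinset : Set ℂ) := by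
    ext t
    simp only [Set.mem_ofPred_eq, Finset.mem_coe, Multiset.mem_toFinset, Polynomial.mem_roots hp,
      Polynomial.IsRoot.def]
    simp [p, sub_eq_iff_eq_add, add_comm]
  rw [hset, Set.ncard_coe_finset, Multiset.toFinset_card_of_nodup hnodup,
    ← (IsAlgClosed.splits p).natDegree_eq_card_roots, hdeg]

theorem hasTopDegreeN_fda (hd : 2 ≤ d) (ha : ∀ i, a i ≠ 0) :
    HasTopDegreeN (m + 1) (fda m d a) d := by
  refine ⟨C ((1 - d : ℂ) ^ (d - 1)) * (∑ j : Fin m, X j.castSucc ^ a j) ^ d -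
    X (Fin.last m) ^ (d - 1), fun h0 => ?_, fun y hy => ?_⟩
  · have h1 := congrArg (eval (Pi.single (Fin.last m) (1 : ℂ))) h0
    have hd0 : d ≠ 0 := by omega
    simp [ha, hd0, Fin.castSucc_ne_last] at h1
  · simp only [map_sub, map_mul, map_pow, map_sum, eval_C, eval_X] at hy
    have hpre : fda m d a ⁻¹' {y} = (fun t : ℂ => (Fin.snoc (α := fun _ => ℂ) (Fin.init y) t :
        Fin (m + 1) → ℂ)) '' {t : ℂ | t ^ d - d * (∑ j : Fin m, y j.castSucc ^ a j) * t =
          y (Fin.last m)} := by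
      ext x
      simp only [Set.mem_preimage, Set.mem_singleton_iff, Set.mem_image, Set.mem_ofPred_eq]
      constructor
      · intro hx
        have hj : ∀ j : Fin m, x j.castSucc = y j.castSucc := fun j => by
          simpa [fda, Fin.castSucc_ne_last] using congrFun hx j.castSucc
        refine ⟨x (Fin.last m), ?_, ?_⟩
        · simpa [fda, hj] using congrFun hx (Fin.last m)
        · ext i
          refine Fin.lastCases ?_ (fun j => ?_) i
          · simp
          · simp [Fin.init, hj]
      · rintro ⟨t, ht, rfl⟩
        ext i
        refine Fin.lastCases ?_ (fun j => ?_) i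
        · simpa [fda, Fin.init] using ht
        · simp [fda, Fin.init, Fin.castSucc_ne_last]
    rw [hpre, Set.ncard_image_of_injective, ncard_setOf_pow_sub_mul_eq hd (sub_ne_zero.mp hy)]
    intro s t hst
    simpa using congrFun hst (Fin.last m)

end Family

/-- For `n = m+1 ≥ 2` and `d ≥ 3`: if `∏(aᵢ−1) ≠ ∏(bᵢ−1)` (all
`aᵢ, bᵢ ≥ 2`), then `f_{d,a}` and `f_{d,b}` are not equivalent. Consequently,
for each `d ≥ 3` there are infinitely many equivalence classes of proper
polynomial self-maps of `ℂⁿ` of topological degree `d`. -/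
theorem stmt_18 (m : ℕ) (hm : 1 ≤ m) (d : ℕ) (hd : 3 ≤ d)
    (a b : Fin m → ℕ) (ha : ∀ i, 2 ≤ a i) (hb : ∀ i, 2 ≤ b i)
    (hne : ∏ i, (a i - 1) ≠ ∏ i, (b i - 1)) :
    ¬ EquivMaps (m + 1) (fda m d a) (fda m d b) ∧
    ∃ F : ℕ → ((Fin (m + 1) → ℂ) → (Fin (m + 1) → ℂ)),
      (∀ k, IsPolyMapN (m + 1) (F k) ∧ IsProperN (m + 1) (F k) ∧
        HasTopDegreeN (m + 1) (F k) d) ∧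
      ∀ k l, k ≠ l → ¬ EquivMaps (m + 1) (F k) (F l) := by
  refine ⟨not_equivMaps_fda hd ha hb hne, fun k => fda m d fun _ => k + 2, fun k =>
    ⟨isPolyMapN_fda _ _ _, isProperN_fda (by omega) _, hasTopDegreeN_fda (by omega) (by simp)⟩,
    fun k l hkl => not_equivMaps_fda hd (by simp) (by simp) fun h => hkl ?_⟩
  simp only [Finset.prod_const, Finset.card_univ, Fintype.card_fin] at h
  have := Nat.pow_left_injective (by omega : m ≠ 0) h
  omega
end
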